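/- arXiv:1411.1191 — 7 statements merged into one kernel-verified Lean document; each statement's English description precedes it below -/
import Mathlib

section
/- For every integer n ≥ 1 there exists a polynomial P with rational coefficients of degree 2n such that for every integer k ≥ 2, Σ_{θ=1}^{k-1} 1/sin^(2n)(πθ/k) = P(k). -/
open Real

noncomputable def auxU (ω : ℂ) (m : ℕ) : Fin m → ℂ := fun i => 1 / (1 - ω ^ ((i : ℕ) + 1))

lemma aux_pt {m : ℕ} {ω : ℂ} (h : IsPrimitiveRoot ω (m + 1)) (t : ℂ) :
    (t + 1) ^ (m + 1) - t ^ (m + 1) = ∏ i : Fin m, (t + 1 - ω ^ ((i : ℕ) + 1) * t) := by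
  rw [h.pow_sub_pow_eq_prod_sub_mul _ _ (Nat.succ_pos m)]
  have : Polynomial.nthRootsFinset (m + 1) (1 : ℂ) =
      (Finset.range (m + 1)).image (fun i => ω ^ i) := by
    ext z
    rw [Polynomial.mem_nthRootsFinset (Nat.succ_pos m)]
    simp only [Finset.mem_image, Finset.mem_range]
    constructor
    · intro hz
      obtain ⟨i, hi, e⟩ := h.eq_pow_of_pow_eq_one hz
      exact ⟨i, hi, e⟩
    · rintro ⟨i, hi, rfl⟩
      rw [← pow_mul, mul_comm, pow_mul, h.pow_eq_one, one_pow]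
  rw [this, Finset.prod_image, Finset.prod_range_succ', Finset.prod_range]
  · simp
  · intro a ha b hb hab
    exact h.pow_inj (by simpa using ha) (by simpa using hb) hab

lemma aux_ne {m : ℕ} {ω : ℂ} (h : IsPrimitiveRoot ω (m + 1)) (i : Fin m) :
    1 - ω ^ ((i : ℕ) + 1) ≠ 0 := by
  intro e
  exact h.pow_ne_one_of_pos_of_lt (Nat.succ_ne_zero i) (by omega) (sub_eq_zero.mp e).symm

lemma aux_poly {m : ℕ} {ω : ℂ} (h : IsPrimitiveRoot ω (m + 1)) :
    ∃ c : ℂ, (Polynomial.X + 1 : Polynomial ℂ) ^ (m + 1) - Polynomial.X ^ (m + 1) =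
      Polynomial.C c * ∏ i : Fin m, (Polynomial.X + Polynomial.C (auxU ω m i)) := by
  refine ⟨∏ i : Fin m, (1 - ω ^ ((i : ℕ) + 1)), ?_⟩
  apply Polynomial.funext
  intro t
  simp only [Polynomial.eval_sub, Polynomial.eval_pow, Polynomial.eval_add, Polynomial.eval_X,
    Polynomial.eval_one, Polynomial.eval_mul, Polynomial.eval_C, Polynomial.eval_prod]
  rw [aux_pt h, ← Finset.prod_mul_distrib]
  refine Finset.prod_congr rfl fun i _ => ?_
  have := aux_ne h i
  unfold auxU
  field_simp
  ring

lemma aux_esymm {m : ℕ} {ω : ℂ} (h : IsPrimitiveRoot ω (m + 1)) (j : ℕ) :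
    ((m + 1 : ℕ) : ℂ) * MvPolynomial.aeval (auxU ω m) (MvPolynomial.esymm (Fin m) ℚ j) =
      ((m + 1).choose (j + 1) : ℂ) := by
  obtain ⟨c, hc⟩ := aux_poly h
  have key : ∀ j ≤ m, c * MvPolynomial.aeval (auxU ω m) (MvPolynomial.esymm (Fin m) ℚ j) =
      ((m + 1).choose (j + 1) : ℂ) := by
    intro j hj
    have h1 := congrArg (fun p => Polynomial.coeff p (m - j)) hc
    simp only [Polynomial.coeff_C_mul, Polynomial.coeff_sub, Polynomial.coeff_X_add_one_pow,
      Polynomial.coeff_X_pow] at h1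
    rw [Finset.prod_X_add_C_coeff _ _ (by simp), if_neg (by omega)] at h1
    rw [MvPolynomial.aeval_esymm_eq_multiset_esymm, Finset.esymm_map_val]
    have e : (Finset.univ : Finset (Fin m)).card - (m - j) = j := by simp; omega
    rw [e] at h1
    rw [← h1, sub_zero, ← Nat.choose_symm (show j + 1 ≤ m + 1 by omega)]
    congr 2
    omega
  have hc0 : c = ((m + 1 : ℕ) : ℂ) := by
    have := key 0 (Nat.zero_le _)
    simpa using this
  by_cases hj : j ≤ m
  · rw [← hc0, key j hj]
  · rw [Nat.choose_eq_zero_of_lt (by omega), MvPolynomial.aeval_esymm_eq_multiset_esymm,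
      Finset.esymm_map_val, Finset.powersetCard_eq_empty.mpr (by simp; omega)]
    simp

lemma aux_E (j : ℕ) : ∃ P : Polynomial ℚ, P.natDegree ≤ j ∧ ∀ m : ℕ,
    ((m + 1 : ℕ) : ℚ) * P.eval ((m + 1 : ℕ) : ℚ) = ((m + 1).choose (j + 1) : ℚ) := by
  induction j with
  | zero => exact ⟨1, by simp, by simp⟩
  | succ j ih =>
    obtain ⟨P, hd, hP⟩ := ih
    refine ⟨Polynomial.C (1 / ((j : ℚ) + 2)) * (P * (Polynomial.X - Polynomial.C ((j : ℚ) + 1))),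
      ?_, ?_⟩
    · refine (Polynomial.natDegree_C_mul_le _ _).trans (Polynomial.natDegree_mul_le.trans ?_)
      rw [Polynomial.natDegree_X_sub_C]
      omega
    · intro m
      simp only [Polynomial.eval_mul, Polynomial.eval_C, Polynomial.eval_sub, Polynomial.eval_X]
      have h1 := Nat.choose_succ_right_eq (m + 1) (j + 1)
      have h2 : ((m + 1).choose (j + 2) : ℚ) * ((j : ℚ) + 2) =
          ((m + 1).choose (j + 1) : ℚ) * (((m + 1 : ℕ) : ℚ) - ((j : ℚ) + 1)) := by
        by_cases hj : j ≤ m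
        · have := congrArg (Nat.cast : ℕ → ℚ) h1
          rw [Nat.cast_mul, Nat.cast_mul, Nat.cast_sub (by omega)] at this
          push_cast at this ⊢
          linear_combination this
        · rw [Nat.choose_eq_zero_of_lt (show m + 1 < j + 2 by omega),
            Nat.choose_eq_zero_of_lt (show m + 1 < j + 1 by omega)]
          simp
      have h3 : (j : ℚ) + 2 ≠ 0 := by positivity
      rw [← hP m] at h2
      show _ = ((m + 1).choose (j + 2) : ℚ)
      field_simp
      linear_combination -h2

lemma aux_P (r : ℕ) : 0 < r → ∃ P : Polynomial ℚ, P.natDegree ≤ r ∧ ∀ (m : ℕ) (ω : ℂ),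
    IsPrimitiveRoot ω (m + 1) →
    ∑ i : Fin m, auxU ω m i ^ r = ((P.eval ((m + 1 : ℕ) : ℚ) : ℚ) : ℂ) := by
  choose E hEd hE using aux_E
  have hE' : ∀ j m (ω : ℂ), IsPrimitiveRoot ω (m + 1) →
      MvPolynomial.aeval (auxU ω m) (MvPolynomial.esymm (Fin m) ℚ j) =
        (((E j).eval ((m + 1 : ℕ) : ℚ) : ℚ) : ℂ) := by
    intro j m ω h
    have h1 := aux_esymm h j
    have h2 := congrArg (Rat.cast : ℚ → ℂ) (hE j m)
    rw [Rat.cast_mul, Rat.cast_natCast, Rat.cast_natCast, ← h1] at h2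
    exact (mul_left_cancel₀ (Nat.cast_ne_zero.mpr (Nat.succ_ne_zero m)) h2).symm
  induction r using Nat.strong_induction_on with
  | _ r ih =>
  intro hr
  have : ∀ s : ℕ, ∃ P : Polynomial ℚ, s < r → 0 < s → (P.natDegree ≤ s ∧ ∀ (m : ℕ) (ω : ℂ),
    IsPrimitiveRoot ω (m + 1) →
    ∑ i : Fin m, auxU ω m i ^ s = ((P.eval ((m + 1 : ℕ) : ℚ) : ℚ) : ℂ)) := by
    intro s
    by_cases h : s < r ∧ 0 < s
    · obtain ⟨P, hP⟩ := ih s h.1 h.2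
      exact ⟨P, fun _ _ => hP⟩
    · exact ⟨0, fun a b => absurd ⟨a, b⟩ h⟩
  choose Q hQ using this
  refine ⟨Polynomial.C ((-1) ^ (r + 1) * (r : ℚ)) * E r -
    ∑ a ∈ Finset.HasAntidiagonal.antidiagonal r with a.1 ∈ Set.Ioo 0 r,
      Polynomial.C ((-1) ^ a.1) * (E a.1 * Q a.2), ?_, ?_⟩
  · refine (Polynomial.natDegree_sub_le _ _).trans (max_le ?_ ?_)
    · exact (Polynomial.natDegree_C_mul_le _ _).trans (hEd r)
    · refine Polynomial.natDegree_sum_le_of_forall_le _ _ fun a ha => ?_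
      simp only [Finset.mem_filter, Finset.HasAntidiagonal.mem_antidiagonal, Set.mem_Ioo] at ha
      refine (Polynomial.natDegree_C_mul_le _ _).trans (Polynomial.natDegree_mul_le.trans ?_)
      have := hEd a.1
      have := (hQ a.2 (by omega) (by omega)).1
      omega
  · intro m ω h
    have h1 := congrArg (MvPolynomial.aeval (auxU ω m))
      (MvPolynomial.psum_eq_mul_esymm_sub_sum (Fin m) ℚ r hr)
    simp only [map_sub, map_mul, map_sum, map_pow, map_neg, map_one, map_natCast, hE' _ m ω h] at h1
    have h2 : ∀ s, MvPolynomial.aeval (auxU ω m) (MvPolynomial.psum (Fin m) ℚ s) =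
        ∑ i : Fin m, auxU ω m i ^ s := by
      intro s
      simp [MvPolynomial.psum]
    rw [← h2, h1]
    simp only [Polynomial.eval_sub, Polynomial.eval_mul, Polynomial.eval_C,
      Polynomial.eval_finsetSum, Rat.cast_sub, Rat.cast_mul, Rat.cast_sum, Rat.cast_pow,
      Rat.cast_neg, Rat.cast_one, Rat.cast_natCast]
    congr 1
    refine Finset.sum_congr rfl fun a ha => ?_
    simp only [Finset.mem_filter, Finset.HasAntidiagonal.mem_antidiagonal, Set.mem_Ioo] at ha
    rw [h2, (hQ a.2 (by omega) (by omega)).2 m ω h, mul_assoc]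

lemma aux_sin (z : ℂ) (hz : Complex.sin z ≠ 0) :
    1 / Complex.sin z ^ 2 = 4 * (1 / (1 - Complex.exp (2 * z * Complex.I)) *
      (1 - 1 / (1 - Complex.exp (2 * z * Complex.I)))) := by
  have e : Complex.exp (2 * z * Complex.I) = Complex.exp (z * Complex.I) ^ 2 := by
    rw [← Complex.exp_nat_mul]; congr 1; push_cast; ring
  have hw := Complex.exp_ne_zero (z * Complex.I)
  have hs : Complex.sin z = (1 / Complex.exp (z * Complex.I) - Complex.exp (z * Complex.I))
      * Complex.I / 2 := by
    rw [Complex.sin, neg_mul, Complex.exp_neg, one_div]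
  rw [e]
  rw [hs] at hz ⊢
  generalize Complex.exp (z * Complex.I) = w at *
  have h1 : 1 - w ^ 2 ≠ 0 := by
    intro h
    apply hz
    have : 1 / w - w = (1 - w ^ 2) / w := by field_simp
    rw [this, h]; simp
  have h2 : (1 / w - w) * Complex.I / 2 = (1 - w ^ 2) * Complex.I / (2 * w) := by field_simp
  rw [h2, div_pow, mul_pow, Complex.I_sq]
  field_simp
  ring

lemma aux_main (n : ℕ) (hn : 1 ≤ n) :
    ∃ P : Polynomial ℚ, P.natDegree ≤ 2 * n ∧
      ∀ k : ℕ, 2 ≤ k →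
        ∑ θ ∈ Finset.Icc 1 (k - 1), 1 / Real.sin (π * θ / k) ^ (2 * n) =
          ((P.eval (k : ℚ) : ℚ) : ℝ) := by
  choose P hPd hP using aux_P
  have hpos : ∀ a, 0 < n + a := fun a => by omega
  refine ⟨∑ a ∈ Finset.range (n + 1), Polynomial.C (4 ^ n * ((-1) ^ a * (n.choose a : ℚ))) *
    P (n + a) (hpos a), ?_, ?_⟩
  · refine Polynomial.natDegree_sum_le_of_forall_le _ _ fun a ha => ?_
    refine (Polynomial.natDegree_C_mul_le _ _).trans ((hPd _ _).trans ?_)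
    have := Finset.mem_range.mp ha
    omega
  · intro k hk
    obtain ⟨m, rfl⟩ : ∃ m, k = m + 1 := ⟨k - 1, by omega⟩
    have h := Complex.isPrimitiveRoot_exp (m + 1) (Nat.succ_ne_zero m)
    set ω := Complex.exp (2 * π * Complex.I / ((m + 1 : ℕ) : ℂ)) with hω
    have hterm : ∀ i : Fin m,
        ((1 / Real.sin (π * ((i : ℕ) + 1 : ℕ) / (m + 1 : ℕ)) ^ (2 * n) : ℝ) : ℂ) =
        ∑ a ∈ Finset.range (n + 1),
          4 ^ n * ((-1) ^ a * (n.choose a : ℂ)) * auxU ω m i ^ (n + a) := by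
      intro i
      have hne : Real.sin (π * ((i : ℕ) + 1 : ℕ) / (m + 1 : ℕ)) ≠ 0 := by
        apply ne_of_gt
        apply Real.sin_pos_of_pos_of_lt_pi
        · have := Real.pi_pos
          positivity
        · rw [div_lt_iff₀ (by positivity)]
          apply mul_lt_mul_of_pos_left _ Real.pi_pos
          have := i.2
          exact_mod_cast (by omega : (i : ℕ) + 1 < m + 1)
      have hne' : Complex.sin ((π * ((i : ℕ) + 1 : ℕ) / (m + 1 : ℕ) : ℝ) : ℂ) ≠ 0 := by
        rw [← Complex.ofReal_sin]
        exact_mod_cast hne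
      have h1 := aux_sin _ hne'
      have h2 : Complex.exp (2 * ((π * ((i : ℕ) + 1 : ℕ) / (m + 1 : ℕ) : ℝ) : ℂ) * Complex.I) =
          ω ^ ((i : ℕ) + 1) := by
        rw [hω, ← Complex.exp_nat_mul]
        congr 1
        push_cast
        ring
      rw [h2] at h1
      change _ = 4 * (auxU ω m i * (1 - auxU ω m i)) at h1
      have h3 : ((1 / Real.sin (π * ((i : ℕ) + 1 : ℕ) / (m + 1 : ℕ)) ^ (2 * n) : ℝ) : ℂ) =
          (1 / Complex.sin ((π * ((i : ℕ) + 1 : ℕ) / (m + 1 : ℕ) : ℝ) : ℂ) ^ 2) ^ n := by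
        rw [div_pow, one_pow, ← pow_mul, Complex.ofReal_div, Complex.ofReal_pow,
          Complex.ofReal_sin, Complex.ofReal_one]
      rw [h3, h1, mul_pow, mul_pow, sub_eq_neg_add, add_pow, Finset.mul_sum, Finset.mul_sum]
      refine Finset.sum_congr rfl fun a _ => ?_
      rw [neg_pow, one_pow, pow_add]
      ring
    have hsum : ∑ θ ∈ Finset.Icc 1 (m + 1 - 1), 1 / Real.sin (π * θ / (m + 1 : ℕ)) ^ (2 * n) =
        ∑ i : Fin m, 1 / Real.sin (π * ((i : ℕ) + 1 : ℕ) / (m + 1 : ℕ)) ^ (2 * n) := by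
      rw [← Finset.sum_range (fun i => 1 / Real.sin (π * (i + 1 : ℕ) / (m + 1 : ℕ)) ^ (2 * n)),
        Finset.range_eq_Ico,
        Finset.sum_Ico_add' (fun i : ℕ => 1 / Real.sin (π * i / (m + 1 : ℕ)) ^ (2 * n)) 0 m 1]
      rfl
    rw [hsum]
    apply Complex.ofReal_injective
    rw [Complex.ofReal_sum, Finset.sum_congr rfl fun i _ => hterm i, Finset.sum_comm,
      Polynomial.eval_finsetSum]
    rw [Complex.ofReal_ratCast, Rat.cast_sum]
    refine Finset.sum_congr rfl fun a _ => ?_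
    rw [← Finset.mul_sum, hP (n + a) (hpos a) m ω h, Polynomial.eval_mul, Polynomial.eval_C]
    push_cast
    ring

theorem stmt_5 (n : ℕ) (hn : 1 ≤ n) :
    ∃ P : Polynomial ℚ, P.degree = 2 * n ∧
      ∀ k : ℕ, 2 ≤ k →
        ∑ θ ∈ Finset.Icc 1 (k - 1), 1 / Real.sin (π * θ / k) ^ (2 * n) =
          ((P.eval (k : ℚ) : ℚ) : ℝ) := by
  obtain ⟨P, hd, hP⟩ := aux_main n hn
  refine ⟨P, ?_, hP⟩
  have hle : P.degree ≤ ((2 * n : ℕ) : WithBot ℕ) := Polynomial.degree_le_of_natDegree_le hd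
  rw [show (2 * n : WithBot ℕ) = ((2 * n : ℕ) : WithBot ℕ) by push_cast; rfl]
  refine le_antisymm hle ?_
  by_contra hlt
  rw [not_le] at hlt
  have ht := Polynomial.div_tendsto_atTop_zero_of_degree_lt (P.map (algebraMap ℚ ℝ))
    (Polynomial.X ^ (2 * n)) (by rw [Polynomial.degree_map, Polynomial.degree_X_pow]; exact hlt)
  have ht2 := ht.comp (tendsto_natCast_atTop_atTop (R := ℝ))
  have hpi := Real.pi_pos
  have hc : (1 / π) ^ (2 * n) ≤ 0 := by
    refine ge_of_tendsto ht2 ?_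
    filter_upwards [Filter.eventually_ge_atTop 2] with k hk
    have hk0 : (0 : ℝ) < k := by exact_mod_cast (by omega : 0 < k)
    have he : Polynomial.eval (k : ℝ) (P.map (algebraMap ℚ ℝ)) = ((P.eval (k : ℚ) : ℚ) : ℝ) := by
      have := Polynomial.eval_map_algebraMap (B := ℝ) P (k : ℝ)
      rw [this, show (k : ℝ) = algebraMap ℚ ℝ (k : ℚ) by simp,
        Polynomial.aeval_algebraMap_apply]
      simp
    simp only [Function.comp_apply, Polynomial.eval_pow, Polynomial.eval_X]
    rw [he, ← hP k hk, le_div_iff₀ (by positivity), ← mul_pow]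
    have hs : 0 < Real.sin (π * (1 : ℕ) / k) := by
      apply Real.sin_pos_of_pos_of_lt_pi
      · push_cast; positivity
      · rw [div_lt_iff₀ hk0]
        apply mul_lt_mul_of_pos_left _ hpi
        exact_mod_cast (by omega : 1 < k)
    have hs2 : Real.sin (π * (1 : ℕ) / k) ≤ π * (1 : ℕ) / k :=
      Real.sin_le (by push_cast; positivity)
    have h1 : (1 / π * k) ^ (2 * n) ≤ 1 / Real.sin (π * (1 : ℕ) / k) ^ (2 * n) := by
      rw [← one_div_pow]
      apply pow_le_pow_left₀ (by positivity)
      rw [le_div_iff₀ hs]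
      calc 1 / π * k * Real.sin (π * (1 : ℕ) / k) ≤ 1 / π * k * (π * (1 : ℕ) / k) := by gcongr
        _ = 1 := by push_cast; field_simp
    refine h1.trans ?_
    refine Finset.single_le_sum (f := fun θ : ℕ => 1 / Real.sin (π * θ / k) ^ (2 * n))
      (fun θ _ => ?_) (Finset.mem_Icc.mpr ⟨le_rfl, by omega⟩)
    rw [pow_mul]
    positivity
  have : 0 < (1 / π) ^ (2 * n) := by positivity
  linarith
end

section
/- Let p be an odd prime with p > 6. Then (p^3/2^7) · Σ_{θ=1}^{p-1} 1/sin^6(πθ/p) = (2p^9 + 21p^7 + 168p^5 - 191p^3)/120960. (This is the genus-4 case of the degree formula of Corollary 5.4.) -/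
open Real

lemma aux_cos_sum (p : ℕ) (x : ℝ) (hx : sin x ≠ 0) (hpx : sin (p * x) = 0) :
    ∑ j ∈ Finset.range p, cos (2 * x * j) = 0 := by
  have h : ∀ n : ℕ, 2 * sin x * ∑ j ∈ Finset.range n, cos (2 * x * j)
      = sin (2 * (n * x) - x) + sin x := by
    intro n
    induction n with
    | zero => simp
    | succ n ih =>
      rw [Finset.sum_range_succ, mul_add, ih]
      have e1 : 2 * (((n + 1 : ℕ) : ℝ) * x) - x = 2 * x * n + x := by push_cast; ring
      have e2 : 2 * ((n : ℝ) * x) - x = 2 * x * n - x := by ring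
      rw [e1, e2, sin_add, sin_sub]; ring
  have h2 := h p
  rw [sin_sub, sin_two_mul, cos_two_mul, cos_sq', hpx] at h2
  have h3 : 2 * sin x * ∑ j ∈ Finset.range p, cos (2 * x * j) = 0 := by rw [h2]; ring
  rcases mul_eq_zero.1 h3 with h4 | h4
  · exact absurd (by linarith) hx
  · exact h4

lemma aux_sin_ne (p θ : ℕ) (h1 : 1 ≤ θ) (h2 : θ < p) : sin (π * θ / p) ≠ 0 := by
  have hp : (0 : ℝ) < p := by exact_mod_cast (by omega : 0 < p)
  have hθ : (0 : ℝ) < θ := by exact_mod_cast h1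
  have hθp : (θ : ℝ) < p := by exact_mod_cast h2
  apply ne_of_gt
  apply sin_pos_of_pos_of_lt_pi
  · positivity
  · rw [div_lt_iff₀ hp]
    exact mul_lt_mul_of_pos_left hθp pi_pos

lemma aux_cos_sum' (p θ : ℕ) (h1 : 1 ≤ θ) (h2 : θ < p) :
    ∑ j ∈ Finset.range p, cos (2 * (π * θ / p) * j) = 0 := by
  apply aux_cos_sum p _ (aux_sin_ne p θ h1 h2)
  have hp : (p : ℝ) ≠ 0 := by exact_mod_cast (by omega : p ≠ 0)
  rw [mul_div_cancel₀ _ hp, mul_comm]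
  exact sin_nat_mul_pi θ

/-- The twisted power sums. -/
noncomputable def auxS (p m k : ℕ) : ℝ :=
  ∑ θ ∈ Finset.Icc 1 (p - 1), cos (2 * (π * θ / p) * k) / sin (π * θ / p) ^ m

lemma auxS_rec (p m k : ℕ) :
    auxS p (m + 2) (k + 2) - 2 * auxS p (m + 2) (k + 1) + auxS p (m + 2) k
      = -4 * auxS p m (k + 1) := by
  unfold auxS
  rw [Finset.mul_sum, Finset.mul_sum, ← Finset.sum_sub_distrib, ← Finset.sum_add_distrib]
  apply Finset.sum_congr rfl
  intro θ hθ
  rw [Finset.mem_Icc] at hθ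
  have hs := aux_sin_ne p θ hθ.1 (by omega)
  set x := π * θ / p
  have e1 : 2 * x * ((k + 2 : ℕ) : ℝ) = 2 * x * ((k + 1 : ℕ) : ℝ) + 2 * x := by push_cast; ring
  have e2 : 2 * x * (k : ℝ) = 2 * x * ((k + 1 : ℕ) : ℝ) - 2 * x := by push_cast; ring
  rw [e1, e2, cos_add, cos_sub, cos_two_mul, cos_sq']
  field_simp
  ring

lemma auxS_zero (p k : ℕ) (h1 : 1 ≤ k) (h2 : k < p) : auxS p 0 k = -1 := by
  have h := aux_cos_sum' p k h1 h2
  have e : Finset.range p = insert 0 (Finset.Icc 1 (p - 1)) := by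
    ext j; simp only [Finset.mem_range, Finset.mem_insert, Finset.mem_Icc]; omega
  rw [e, Finset.sum_insert (by simp)] at h
  simp only [Nat.cast_zero, mul_zero, cos_zero] at h
  unfold auxS
  have e2 : ∑ θ ∈ Finset.Icc 1 (p - 1), cos (2 * (π * θ / p) * k) / sin (π * θ / p) ^ 0
      = ∑ j ∈ Finset.Icc 1 (p - 1), cos (2 * (π * k / p) * j) := by
    apply Finset.sum_congr rfl
    intro j _
    rw [pow_zero, div_one]
    congr 1
    ring
  rw [e2]
  linarith

lemma auxS_per (p m : ℕ) (hp : p ≠ 0) : auxS p m p = auxS p m 0 := by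
  unfold auxS
  apply Finset.sum_congr rfl
  intro θ _
  have hp : (p : ℝ) ≠ 0 := by exact_mod_cast hp
  have e : 2 * (π * θ / p) * p = θ * (2 * π) := by field_simp
  rw [e, cos_nat_mul_two_pi]; simp

lemma auxS_sum (p m : ℕ) : ∑ k ∈ Finset.range p, auxS p m k = 0 := by
  unfold auxS
  rw [Finset.sum_comm]
  apply Finset.sum_eq_zero
  intro θ hθ
  rw [Finset.mem_Icc] at hθ
  rw [← Finset.sum_div, aux_cos_sum' p θ hθ.1 (by omega), zero_div]

lemma aux_uniq (p : ℕ) (hp : p ≠ 0) (h : ℕ → ℝ)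
    (h2 : ∀ k, k + 1 < p → h (k + 2) - 2 * h (k + 1) + h k = 0)
    (hper : h p = h 0) (hsum : ∑ k ∈ Finset.range p, h k = 0) : ∀ k, k ≤ p → h k = 0 := by
  have hlin : ∀ k, k + 1 ≤ p → h k = h 0 + k * (h 1 - h 0) ∧
      h (k + 1) = h 0 + (k + 1) * (h 1 - h 0) := by
    intro k
    induction k with
    | zero => intro _; simp
    | succ k ih =>
      intro hk
      obtain ⟨a, b⟩ := ih (by omega)
      have := h2 k (by omega)
      refine ⟨by rw [b]; push_cast; ring, ?_⟩
      push_cast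
      rw [show k + 1 + 1 = k + 2 from rfl]
      linarith
  have hp' : (p : ℝ) ≠ 0 := by exact_mod_cast hp
  have hlast := (hlin (p - 1) (by omega)).2
  rw [show p - 1 + 1 = p by omega, hper] at hlast
  have hc : ((p - 1 : ℕ) : ℝ) + 1 = p := by exact_mod_cast (by omega : p - 1 + 1 = p)
  rw [hc] at hlast
  have h10 : h 1 - h 0 = 0 := by
    have : (p : ℝ) * (h 1 - h 0) = 0 := by linarith
    exact (mul_eq_zero.1 this).resolve_left hp'
  have hconst : ∀ k, k < p → h k = h 0 := by
    intro k hk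
    rw [(hlin k hk).1, h10]; ring
  rw [Finset.sum_congr rfl (fun k hk => hconst k (Finset.mem_range.1 hk))] at hsum
  simp only [Finset.sum_const, Finset.card_range, nsmul_eq_mul] at hsum
  have h0 := (mul_eq_zero.1 hsum).resolve_left hp'
  intro k hk
  rcases Nat.lt_or_ge k p with h' | h'
  · rw [hconst k h', h0]
  · rw [show k = p by omega, hper, h0]

lemma aux_polysum (a0 a1 a2 a3 a4 a5 a6 : ℝ) (n : ℕ) :
    ∑ k ∈ Finset.range n, (a0 + a1 * (k : ℝ) + a2 * (k : ℝ) ^ 2 + a3 * (k : ℝ) ^ 3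
      + a4 * (k : ℝ) ^ 4 + a5 * (k : ℝ) ^ 5 + a6 * (k : ℝ) ^ 6)
    = a0 * n + a1 * ((n : ℝ) ^ 2 / 2 - n / 2) + a2 * ((n : ℝ) ^ 3 / 3 - n ^ 2 / 2 + n / 6)
      + a3 * ((n : ℝ) ^ 4 / 4 - n ^ 3 / 2 + n ^ 2 / 4)
      + a4 * ((n : ℝ) ^ 5 / 5 - n ^ 4 / 2 + n ^ 3 / 3 - n / 30)
      + a5 * ((n : ℝ) ^ 6 / 6 - n ^ 5 / 2 + 5 * n ^ 4 / 12 - n ^ 2 / 12)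
      + a6 * ((n : ℝ) ^ 7 / 7 - n ^ 6 / 2 + n ^ 5 / 2 - n ^ 3 / 6 + n / 42) := by
  induction n with
  | zero => simp
  | succ n ih => rw [Finset.sum_range_succ, ih]; push_cast; ring

lemma aux_step (p m : ℕ) (hp : p ≠ 0) (a0 a1 a2 a3 a4 a5 a6 : ℝ)
    (hrec : ∀ k : ℕ, k + 1 < p → -4 * auxS p m (k + 1) =
      2 * a2 + 6 * a3 * ((k : ℝ) + 1) + a4 * (12 * ((k : ℝ) + 1) ^ 2 + 2)
      + a5 * (20 * ((k : ℝ) + 1) ^ 3 + 10 * ((k : ℝ) + 1))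
      + a6 * (30 * ((k : ℝ) + 1) ^ 4 + 30 * ((k : ℝ) + 1) ^ 2 + 2))
    (hper : a1 * (p : ℝ) + a2 * (p : ℝ) ^ 2 + a3 * (p : ℝ) ^ 3
      + a4 * (p : ℝ) ^ 4 + a5 * (p : ℝ) ^ 5 + a6 * (p : ℝ) ^ 6 = 0)
    (hsum : a0 * p + a1 * ((p : ℝ) ^ 2 / 2 - p / 2) + a2 * ((p : ℝ) ^ 3 / 3 - p ^ 2 / 2 + p / 6)
      + a3 * ((p : ℝ) ^ 4 / 4 - p ^ 3 / 2 + p ^ 2 / 4)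
      + a4 * ((p : ℝ) ^ 5 / 5 - p ^ 4 / 2 + p ^ 3 / 3 - p / 30)
      + a5 * ((p : ℝ) ^ 6 / 6 - p ^ 5 / 2 + 5 * p ^ 4 / 12 - p ^ 2 / 12)
      + a6 * ((p : ℝ) ^ 7 / 7 - p ^ 6 / 2 + p ^ 5 / 2 - p ^ 3 / 6 + p / 42) = 0) :
    ∀ k : ℕ, k ≤ p → auxS p (m + 2) k = a0 + a1 * (k : ℝ) + a2 * (k : ℝ) ^ 2 + a3 * (k : ℝ) ^ 3
      + a4 * (k : ℝ) ^ 4 + a5 * (k : ℝ) ^ 5 + a6 * (k : ℝ) ^ 6 := by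
  intro k hk
  have := aux_uniq p hp (fun k => auxS p (m + 2) k - (a0 + a1 * (k : ℝ) + a2 * (k : ℝ) ^ 2
      + a3 * (k : ℝ) ^ 3 + a4 * (k : ℝ) ^ 4 + a5 * (k : ℝ) ^ 5 + a6 * (k : ℝ) ^ 6)) ?_ ?_ ?_ k hk
  · exact sub_eq_zero.1 this
  · intro k hk
    have h1 := auxS_rec p m k
    rw [hrec k hk] at h1
    push_cast
    linear_combination h1
  · simp only [auxS_per p (m + 2) hp]
    push_cast
    linear_combination -hper
  · rw [Finset.sum_sub_distrib, auxS_sum, aux_polysum, hsum, sub_zero]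

theorem stmt_9 (p : ℕ) (hp : p.Prime) (hodd : Odd p) (hp6 : 6 < p) :
    ((p : ℝ) ^ 3 / 2 ^ 7) * ∑ θ ∈ Finset.Icc 1 (p - 1), 1 / Real.sin (π * θ / p) ^ 6 =
      (2 * (p : ℝ) ^ 9 + 21 * p ^ 7 + 168 * p ^ 5 - 191 * p ^ 3) / 120960 := by
  have hp0 : p ≠ 0 := by omega
  obtain ⟨P, hP⟩ : ∃ P : ℝ, P = p := ⟨_, rfl⟩
  obtain ⟨b, hb⟩ : ∃ b : ℝ, b = (P ^ 2 - 1) / 3 := ⟨_, rfl⟩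
  obtain ⟨c2, hc2⟩ : ∃ c : ℝ, c = -2 * b + 2 / 3 := ⟨_, rfl⟩
  obtain ⟨c1, hc1⟩ : ∃ c : ℝ, c = -(2 / 3) * P ^ 3 - c2 * P := ⟨_, rfl⟩
  obtain ⟨c0, hc0⟩ : ∃ c : ℝ, c = (P ^ 2 - 1) * (P ^ 2 + 11) / 45 := ⟨_, rfl⟩
  obtain ⟨d4, hd4⟩ : ∃ c : ℝ, c = (-4 * c2 - 8 / 3) / 12 := ⟨_, rfl⟩
  obtain ⟨d3, hd3⟩ : ∃ c : ℝ, c = (-4 * c1 + 8 * P / 3) / 6 := ⟨_, rfl⟩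
  obtain ⟨d2, hd2⟩ : ∃ c : ℝ, c = -2 * c0 - d4 - 4 / 45 := ⟨_, rfl⟩
  obtain ⟨d1, hd1⟩ : ∃ c : ℝ, c = -(4 / 45 * P ^ 5 + (-4 * P / 15) * P ^ 4 + d4 * P ^ 3
    + d3 * P ^ 2 + d2 * P) := ⟨_, rfl⟩
  have h2 := aux_step p 0 hp0 b (-2 * P) 2 0 0 0 0
    (by intro k hk; rw [auxS_zero p (k + 1) (by omega) hk]; ring)
    (by rw [← hP]; ring) (by rw [← hP, hb]; ring)
  have h4 := aux_step p 2 hp0 c0 c1 c2 (4 * P / 3) (-2 / 3) 0 0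
    (by intro k hk; rw [h2 (k + 1) hk.le, hc2]; push_cast; ring)
    (by rw [← hP, hc1]; ring) (by rw [← hP, hc0, hc1, hc2, hb]; ring)
  have h6 := aux_step p 4 hp0 ((2 * P ^ 6 + 21 * P ^ 4 + 168 * P ^ 2 - 191) / 945) d1 d2 d3 d4
    (-4 * P / 15) (4 / 45)
    (by intro k hk; rw [h4 (k + 1) hk.le, hd2, hd3, hd4]; push_cast; ring)
    (by rw [← hP, hd1]; ring) (by rw [← hP, hd1, hd2, hd3, hd4, hc0, hc1, hc2, hb]; ring)
  have h := h6 0 (by omega)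
  have e : ∑ θ ∈ Finset.Icc 1 (p - 1), 1 / Real.sin (π * θ / p) ^ 6 = auxS p (4 + 2) 0 := by
    unfold auxS; simp
  rw [e, h, ← hP]
  push_cast
  ring
end

section
/- Let p be an odd prime with p > 8. Then (p^4/2^9) · Σ_{θ=1}^{p-1} 1/sin^8(πθ/p) = (3p^12 + 40p^10 + 294p^8 + 2160p^6 - 2497p^4)/7257600. (This is the genus-5 case of the degree formula of Corollary 5.4.) -/
open Real

open Finset in
lemma aux_rec (z : ℂ) (n k : ℕ) (hk : k ≠ 0) (hz : z ^ n = 1) :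
    (∑ j ∈ range n, (j:ℂ)^k * z^j) + (n:ℂ)^k =
      z * ∑ j ∈ range n, ((j:ℂ)+1)^k * z^j := by
  have h1 := Finset.sum_range_succ (fun j : ℕ => (j:ℂ)^k * z^j) n
  have h2 := Finset.sum_range_succ' (fun j : ℕ => (j:ℂ)^k * z^j) n
  rw [h1] at h2
  simp only [hz, mul_one] at h2
  rw [h2, Finset.mul_sum]
  simp only [Nat.cast_zero, zero_pow hk, zero_mul, add_zero]
  refine Finset.sum_congr rfl fun j _ => ?_
  push_cast
  ring

open Finset in
lemma aux_key (z u : ℂ) (n : ℕ) (hz : z ^ n = 1) (hu : u * (1 - z) = 1) :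
    (n:ℂ) * (u^4*(u-1)^4) = ∑ j ∈ range n, (((-1/280)*(n:ℂ)^1) * (j:ℂ)^1 + ((1/280) + (-7/2880)*(n:ℂ)^2 + (-1/4320)*(n:ℂ)^4 + (-1/60480)*(n:ℂ)^6) * (j:ℂ)^2 + ((7/1440)*(n:ℂ)^1) * (j:ℂ)^3 + ((-7/2880) + (1/864)*(n:ℂ)^2 + (1/17280)*(n:ℂ)^4) * (j:ℂ)^4 + ((-1/720)*(n:ℂ)^1) * (j:ℂ)^5 + ((1/2160) + (-1/8640)*(n:ℂ)^2) * (j:ℂ)^6 + ((1/10080)*(n:ℂ)^1) * (j:ℂ)^7 + ((-1/40320)) * (j:ℂ)^8) * z^j := by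
  have e0 : (∑ j ∈ range n, z^j) = 0 := by
    have h := mul_neg_geom_sum z n
    rw [hz, sub_self] at h
    have : (∑ j ∈ range n, z^j) = u * ((1 - z) * ∑ j ∈ range n, z^j) := by
      rw [← mul_assoc, hu, one_mul]
    rw [this, h, mul_zero]
  have huz : u * z = u - 1 := by linear_combination -hu
  have e1 : (∑ j ∈ range n, (j:ℂ)^1 * z^j) = (-1)*(n:ℂ)^1*u^1 := by
    have h := aux_rec z n 1 (by norm_num) hz
    have h' : (∑ j ∈ range n, ((j:ℂ)+1)^1 * z^j) = 1 * (∑ j ∈ range n, z^j) + 1 * (∑ j ∈ range n, (j:ℂ)^1 * z^j) := by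
      simp only [Finset.mul_sum, ← Finset.sum_add_distrib]
      refine Finset.sum_congr rfl fun j _ => ?_
      ring
    rw [h', e0] at h
    generalize (∑ j ∈ range n, (j:ℂ)^1 * z^j) = s at h ⊢
    have h3 := congrArg (fun t => u * t) h
    linear_combination h3 + (0 + s) * huz
  have e2 : (∑ j ∈ range n, (j:ℂ)^2 * z^j) = (2)*(n:ℂ)^1*u^1 + (-2)*(n:ℂ)^1*u^2 + (-1)*(n:ℂ)^2*u^1 := by
    have h := aux_rec z n 2 (by norm_num) hz
    have h' : (∑ j ∈ range n, ((j:ℂ)+1)^2 * z^j) = 1 * (∑ j ∈ range n, z^j) + 2 * (∑ j ∈ range n, (j:ℂ)^1 * z^j) + 1 * (∑ j ∈ range n, (j:ℂ)^2 * z^j) := by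
      simp only [Finset.mul_sum, ← Finset.sum_add_distrib]
      refine Finset.sum_congr rfl fun j _ => ?_
      ring
    rw [h', e0, e1] at h
    generalize (∑ j ∈ range n, (j:ℂ)^2 * z^j) = s at h ⊢
    have h3 := congrArg (fun t => u * t) h
    linear_combination h3 + ((-2)*(n:ℂ)^1*u^1 + s) * huz
  have e3 : (∑ j ∈ range n, (j:ℂ)^3 * z^j) = (-3)*(n:ℂ)^1*u^1 + (9)*(n:ℂ)^1*u^2 + (-6)*(n:ℂ)^1*u^3 + (3)*(n:ℂ)^2*u^1 + (-3)*(n:ℂ)^2*u^2 + (-1)*(n:ℂ)^3*u^1 := by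
    have h := aux_rec z n 3 (by norm_num) hz
    have h' : (∑ j ∈ range n, ((j:ℂ)+1)^3 * z^j) = 1 * (∑ j ∈ range n, z^j) + 3 * (∑ j ∈ range n, (j:ℂ)^1 * z^j) + 3 * (∑ j ∈ range n, (j:ℂ)^2 * z^j) + 1 * (∑ j ∈ range n, (j:ℂ)^3 * z^j) := by
      simp only [Finset.mul_sum, ← Finset.sum_add_distrib]
      refine Finset.sum_congr rfl fun j _ => ?_
      ring
    rw [h', e0, e1, e2] at h
    generalize (∑ j ∈ range n, (j:ℂ)^3 * z^j) = s at h ⊢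
    have h3 := congrArg (fun t => u * t) h
    linear_combination h3 + ((3)*(n:ℂ)^1*u^1 + (-6)*(n:ℂ)^1*u^2 + (-3)*(n:ℂ)^2*u^1 + s) * huz
  have e4 : (∑ j ∈ range n, (j:ℂ)^4 * z^j) = (4)*(n:ℂ)^1*u^1 + (-28)*(n:ℂ)^1*u^2 + (48)*(n:ℂ)^1*u^3 + (-24)*(n:ℂ)^1*u^4 + (-6)*(n:ℂ)^2*u^1 + (18)*(n:ℂ)^2*u^2 + (-12)*(n:ℂ)^2*u^3 + (4)*(n:ℂ)^3*u^1 + (-4)*(n:ℂ)^3*u^2 + (-1)*(n:ℂ)^4*u^1 := by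
    have h := aux_rec z n 4 (by norm_num) hz
    have h' : (∑ j ∈ range n, ((j:ℂ)+1)^4 * z^j) = 1 * (∑ j ∈ range n, z^j) + 4 * (∑ j ∈ range n, (j:ℂ)^1 * z^j) + 6 * (∑ j ∈ range n, (j:ℂ)^2 * z^j) + 4 * (∑ j ∈ range n, (j:ℂ)^3 * z^j) + 1 * (∑ j ∈ range n, (j:ℂ)^4 * z^j) := by
      simp only [Finset.mul_sum, ← Finset.sum_add_distrib]
      refine Finset.sum_congr rfl fun j _ => ?_
      ring
    rw [h', e0, e1, e2, e3] at h
    generalize (∑ j ∈ range n, (j:ℂ)^4 * z^j) = s at h ⊢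
    have h3 := congrArg (fun t => u * t) h
    linear_combination h3 + ((-4)*(n:ℂ)^1*u^1 + (24)*(n:ℂ)^1*u^2 + (-24)*(n:ℂ)^1*u^3 + (6)*(n:ℂ)^2*u^1 + (-12)*(n:ℂ)^2*u^2 + (-4)*(n:ℂ)^3*u^1 + s) * huz
  have e5 : (∑ j ∈ range n, (j:ℂ)^5 * z^j) = (-5)*(n:ℂ)^1*u^1 + (75)*(n:ℂ)^1*u^2 + (-250)*(n:ℂ)^1*u^3 + (300)*(n:ℂ)^1*u^4 + (-120)*(n:ℂ)^1*u^5 + (10)*(n:ℂ)^2*u^1 + (-70)*(n:ℂ)^2*u^2 + (120)*(n:ℂ)^2*u^3 + (-60)*(n:ℂ)^2*u^4 + (-10)*(n:ℂ)^3*u^1 + (30)*(n:ℂ)^3*u^2 + (-20)*(n:ℂ)^3*u^3 + (5)*(n:ℂ)^4*u^1 + (-5)*(n:ℂ)^4*u^2 + (-1)*(n:ℂ)^5*u^1 := by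
    have h := aux_rec z n 5 (by norm_num) hz
    have h' : (∑ j ∈ range n, ((j:ℂ)+1)^5 * z^j) = 1 * (∑ j ∈ range n, z^j) + 5 * (∑ j ∈ range n, (j:ℂ)^1 * z^j) + 10 * (∑ j ∈ range n, (j:ℂ)^2 * z^j) + 10 * (∑ j ∈ range n, (j:ℂ)^3 * z^j) + 5 * (∑ j ∈ range n, (j:ℂ)^4 * z^j) + 1 * (∑ j ∈ range n, (j:ℂ)^5 * z^j) := by
      simp only [Finset.mul_sum, ← Finset.sum_add_distrib]
      refine Finset.sum_congr rfl fun j _ => ?_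
      ring
    rw [h', e0, e1, e2, e3, e4] at h
    generalize (∑ j ∈ range n, (j:ℂ)^5 * z^j) = s at h ⊢
    have h3 := congrArg (fun t => u * t) h
    linear_combination h3 + ((5)*(n:ℂ)^1*u^1 + (-70)*(n:ℂ)^1*u^2 + (180)*(n:ℂ)^1*u^3 + (-120)*(n:ℂ)^1*u^4 + (-10)*(n:ℂ)^2*u^1 + (60)*(n:ℂ)^2*u^2 + (-60)*(n:ℂ)^2*u^3 + (10)*(n:ℂ)^3*u^1 + (-20)*(n:ℂ)^3*u^2 + (-5)*(n:ℂ)^4*u^1 + s) * huz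
  have e6 : (∑ j ∈ range n, (j:ℂ)^6 * z^j) = (6)*(n:ℂ)^1*u^1 + (-186)*(n:ℂ)^1*u^2 + (1080)*(n:ℂ)^1*u^3 + (-2340)*(n:ℂ)^1*u^4 + (2160)*(n:ℂ)^1*u^5 + (-720)*(n:ℂ)^1*u^6 + (-15)*(n:ℂ)^2*u^1 + (225)*(n:ℂ)^2*u^2 + (-750)*(n:ℂ)^2*u^3 + (900)*(n:ℂ)^2*u^4 + (-360)*(n:ℂ)^2*u^5 + (20)*(n:ℂ)^3*u^1 + (-140)*(n:ℂ)^3*u^2 + (240)*(n:ℂ)^3*u^3 + (-120)*(n:ℂ)^3*u^4 + (-15)*(n:ℂ)^4*u^1 + (45)*(n:ℂ)^4*u^2 + (-30)*(n:ℂ)^4*u^3 + (6)*(n:ℂ)^5*u^1 + (-6)*(n:ℂ)^5*u^2 + (-1)*(n:ℂ)^6*u^1 := by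
    have h := aux_rec z n 6 (by norm_num) hz
    have h' : (∑ j ∈ range n, ((j:ℂ)+1)^6 * z^j) = 1 * (∑ j ∈ range n, z^j) + 6 * (∑ j ∈ range n, (j:ℂ)^1 * z^j) + 15 * (∑ j ∈ range n, (j:ℂ)^2 * z^j) + 20 * (∑ j ∈ range n, (j:ℂ)^3 * z^j) + 15 * (∑ j ∈ range n, (j:ℂ)^4 * z^j) + 6 * (∑ j ∈ range n, (j:ℂ)^5 * z^j) + 1 * (∑ j ∈ range n, (j:ℂ)^6 * z^j) := by
      simp only [Finset.mul_sum, ← Finset.sum_add_distrib]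
      refine Finset.sum_congr rfl fun j _ => ?_
      ring
    rw [h', e0, e1, e2, e3, e4, e5] at h
    generalize (∑ j ∈ range n, (j:ℂ)^6 * z^j) = s at h ⊢
    have h3 := congrArg (fun t => u * t) h
    linear_combination h3 + ((-6)*(n:ℂ)^1*u^1 + (180)*(n:ℂ)^1*u^2 + (-900)*(n:ℂ)^1*u^3 + (1440)*(n:ℂ)^1*u^4 + (-720)*(n:ℂ)^1*u^5 + (15)*(n:ℂ)^2*u^1 + (-210)*(n:ℂ)^2*u^2 + (540)*(n:ℂ)^2*u^3 + (-360)*(n:ℂ)^2*u^4 + (-20)*(n:ℂ)^3*u^1 + (120)*(n:ℂ)^3*u^2 + (-120)*(n:ℂ)^3*u^3 + (15)*(n:ℂ)^4*u^1 + (-30)*(n:ℂ)^4*u^2 + (-6)*(n:ℂ)^5*u^1 + s) * huz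
  have e7 : (∑ j ∈ range n, (j:ℂ)^7 * z^j) = (-7)*(n:ℂ)^1*u^1 + (441)*(n:ℂ)^1*u^2 + (-4214)*(n:ℂ)^1*u^3 + (14700)*(n:ℂ)^1*u^4 + (-23520)*(n:ℂ)^1*u^5 + (17640)*(n:ℂ)^1*u^6 + (-5040)*(n:ℂ)^1*u^7 + (21)*(n:ℂ)^2*u^1 + (-651)*(n:ℂ)^2*u^2 + (3780)*(n:ℂ)^2*u^3 + (-8190)*(n:ℂ)^2*u^4 + (7560)*(n:ℂ)^2*u^5 + (-2520)*(n:ℂ)^2*u^6 + (-35)*(n:ℂ)^3*u^1 + (525)*(n:ℂ)^3*u^2 + (-1750)*(n:ℂ)^3*u^3 + (2100)*(n:ℂ)^3*u^4 + (-840)*(n:ℂ)^3*u^5 + (35)*(n:ℂ)^4*u^1 + (-245)*(n:ℂ)^4*u^2 + (420)*(n:ℂ)^4*u^3 + (-210)*(n:ℂ)^4*u^4 + (-21)*(n:ℂ)^5*u^1 + (63)*(n:ℂ)^5*u^2 + (-42)*(n:ℂ)^5*u^3 + (7)*(n:ℂ)^6*u^1 + (-7)*(n:ℂ)^6*u^2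 + (-1)*(n:ℂ)^7*u^1 := by
    have h := aux_rec z n 7 (by norm_num) hz
    have h' : (∑ j ∈ range n, ((j:ℂ)+1)^7 * z^j) = 1 * (∑ j ∈ range n, z^j) + 7 * (∑ j ∈ range n, (j:ℂ)^1 * z^j) + 21 * (∑ j ∈ range n, (j:ℂ)^2 * z^j) + 35 * (∑ j ∈ range n, (j:ℂ)^3 * z^j) + 35 * (∑ j ∈ range n, (j:ℂ)^4 * z^j) + 21 * (∑ j ∈ range n, (j:ℂ)^5 * z^j) + 7 * (∑ j ∈ range n, (j:ℂ)^6 * z^j) + 1 * (∑ j ∈ range n, (j:ℂ)^7 * z^j) := by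
      simp only [Finset.mul_sum, ← Finset.sum_add_distrib]
      refine Finset.sum_congr rfl fun j _ => ?_
      ring
    rw [h', e0, e1, e2, e3, e4, e5, e6] at h
    generalize (∑ j ∈ range n, (j:ℂ)^7 * z^j) = s at h ⊢
    have h3 := congrArg (fun t => u * t) h
    linear_combination h3 + ((7)*(n:ℂ)^1*u^1 + (-434)*(n:ℂ)^1*u^2 + (3780)*(n:ℂ)^1*u^3 + (-10920)*(n:ℂ)^1*u^4 + (12600)*(n:ℂ)^1*u^5 + (-5040)*(n:ℂ)^1*u^6 + (-21)*(n:ℂ)^2*u^1 + (630)*(n:ℂ)^2*u^2 + (-3150)*(n:ℂ)^2*u^3 + (5040)*(n:ℂ)^2*u^4 + (-2520)*(n:ℂ)^2*u^5 + (35)*(n:ℂ)^3*u^1 + (-490)*(n:ℂ)^3*u^2 + (1260)*(n:ℂ)^3*u^3 + (-840)*(n:ℂ)^3*u^4 + (-35)*(n:ℂ)^4*u^1 + (210)*(n:ℂ)^4*u^2 + (-210)*(n:ℂ)^4*u^3 + (21)*(n:ℂ)^5*u^1 + (-42)*(n:ℂ)^5*u^2 + (-7)*(n:ℂ)^6*u^1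 + s) * huz
  have e8 : (∑ j ∈ range n, (j:ℂ)^8 * z^j) = (8)*(n:ℂ)^1*u^1 + (-1016)*(n:ℂ)^1*u^2 + (15456)*(n:ℂ)^1*u^3 + (-81648)*(n:ℂ)^1*u^4 + (201600)*(n:ℂ)^1*u^5 + (-255360)*(n:ℂ)^1*u^6 + (161280)*(n:ℂ)^1*u^7 + (-40320)*(n:ℂ)^1*u^8 + (-28)*(n:ℂ)^2*u^1 + (1764)*(n:ℂ)^2*u^2 + (-16856)*(n:ℂ)^2*u^3 + (58800)*(n:ℂ)^2*u^4 + (-94080)*(n:ℂ)^2*u^5 + (70560)*(n:ℂ)^2*u^6 + (-20160)*(n:ℂ)^2*u^7 + (56)*(n:ℂ)^3*u^1 + (-1736)*(n:ℂ)^3*u^2 + (10080)*(n:ℂ)^3*u^3 + (-21840)*(n:ℂ)^3*u^4 + (20160)*(n:ℂ)^3*u^5 + (-6720)*(n:ℂ)^3*u^6 + (-70)*(n:ℂ)^4*u^1 + (1050)*(n:ℂ)^4*u^2 + (-3500)*(n:ℂ)^4*u^3 + (4200)*(n:ℂ)^4*u^4 + (-1680)*(n:ℂ)^4*u^5 + (56)*(n:ℂ)^5*u^1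 + (-392)*(n:ℂ)^5*u^2 + (672)*(n:ℂ)^5*u^3 + (-336)*(n:ℂ)^5*u^4 + (-28)*(n:ℂ)^6*u^1 + (84)*(n:ℂ)^6*u^2 + (-56)*(n:ℂ)^6*u^3 + (8)*(n:ℂ)^7*u^1 + (-8)*(n:ℂ)^7*u^2 + (-1)*(n:ℂ)^8*u^1 := by
    have h := aux_rec z n 8 (by norm_num) hz
    have h' : (∑ j ∈ range n, ((j:ℂ)+1)^8 * z^j) = 1 * (∑ j ∈ range n, z^j) + 8 * (∑ j ∈ range n, (j:ℂ)^1 * z^j) + 28 * (∑ j ∈ range n, (j:ℂ)^2 * z^j) + 56 * (∑ j ∈ range n, (j:ℂ)^3 * z^j) + 70 * (∑ j ∈ range n, (j:ℂ)^4 * z^j) + 56 * (∑ j ∈ range n, (j:ℂ)^5 * z^j) + 28 * (∑ j ∈ range n, (j:ℂ)^6 * z^j) + 8 * (∑ j ∈ range n, (j:ℂ)^7 * z^j) + 1 * (∑ j ∈ range n, (j:ℂ)^8 * z^j) := by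
      simp only [Finset.mul_sum, ← Finset.sum_add_distrib]
      refine Finset.sum_congr rfl fun j _ => ?_
      ring
    rw [h', e0, e1, e2, e3, e4, e5, e6, e7] at h
    generalize (∑ j ∈ range n, (j:ℂ)^8 * z^j) = s at h ⊢
    have h3 := congrArg (fun t => u * t) h
    linear_combination h3 + ((-8)*(n:ℂ)^1*u^1 + (1008)*(n:ℂ)^1*u^2 + (-14448)*(n:ℂ)^1*u^3 + (67200)*(n:ℂ)^1*u^4 + (-134400)*(n:ℂ)^1*u^5 + (120960)*(n:ℂ)^1*u^6 + (-40320)*(n:ℂ)^1*u^7 + (28)*(n:ℂ)^2*u^1 + (-1736)*(n:ℂ)^2*u^2 + (15120)*(n:ℂ)^2*u^3 + (-43680)*(n:ℂ)^2*u^4 + (50400)*(n:ℂ)^2*u^5 + (-20160)*(n:ℂ)^2*u^6 + (-56)*(n:ℂ)^3*u^1 + (1680)*(n:ℂ)^3*u^2 + (-8400)*(n:ℂ)^3*u^3 + (13440)*(n:ℂ)^3*u^4 + (-6720)*(n:ℂ)^3*u^5 + (70)*(n:ℂ)^4*u^1 + (-980)*(n:ℂ)^4*u^2 + (2520)*(n:ℂ)^4*u^3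 + (-1680)*(n:ℂ)^4*u^4 + (-56)*(n:ℂ)^5*u^1 + (336)*(n:ℂ)^5*u^2 + (-336)*(n:ℂ)^5*u^3 + (28)*(n:ℂ)^6*u^1 + (-56)*(n:ℂ)^6*u^2 + (-8)*(n:ℂ)^7*u^1 + s) * huz
  have e : (∑ j ∈ range n, (((-1/280)*(n:ℂ)^1) * (j:ℂ)^1 + ((1/280) + (-7/2880)*(n:ℂ)^2 + (-1/4320)*(n:ℂ)^4 + (-1/60480)*(n:ℂ)^6) * (j:ℂ)^2 + ((7/1440)*(n:ℂ)^1) * (j:ℂ)^3 + ((-7/2880) + (1/864)*(n:ℂ)^2 + (1/17280)*(n:ℂ)^4) * (j:ℂ)^4 + ((-1/720)*(n:ℂ)^1) * (j:ℂ)^5 + ((1/2160) + (-1/8640)*(n:ℂ)^2) * (j:ℂ)^6 + ((1/10080)*(n:ℂ)^1) * (j:ℂ)^7 + ((-1/40320)) * (j:ℂ)^8) * z^j) = ((-1/280)*(n:ℂ)^1) * (∑ j ∈ range n, (j:ℂ)^1 * z^j) + ((1/280) + (-7/2880)*(n:ℂ)^2 + (-1/4320)*(n:ℂ)^4 + (-1/60480)*(n:ℂ)^6)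 * (∑ j ∈ range n, (j:ℂ)^2 * z^j) + ((7/1440)*(n:ℂ)^1) * (∑ j ∈ range n, (j:ℂ)^3 * z^j) + ((-7/2880) + (1/864)*(n:ℂ)^2 + (1/17280)*(n:ℂ)^4) * (∑ j ∈ range n, (j:ℂ)^4 * z^j) + ((-1/720)*(n:ℂ)^1) * (∑ j ∈ range n, (j:ℂ)^5 * z^j) + ((1/2160) + (-1/8640)*(n:ℂ)^2) * (∑ j ∈ range n, (j:ℂ)^6 * z^j) + ((1/10080)*(n:ℂ)^1) * (∑ j ∈ range n, (j:ℂ)^7 * z^j) + ((-1/40320)) * (∑ j ∈ range n, (j:ℂ)^8 * z^j) := by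
    simp only [Finset.mul_sum, ← Finset.sum_add_distrib]
    refine Finset.sum_congr rfl fun j _ => ?_
    ring
  rw [e, e1, e2, e3, e4, e5, e6, e7, e8]
  ring

open Finset in
lemma aux_csum (n : ℕ) : (∑ j ∈ range n, (((-1/280)*(n:ℂ)^1) * (j:ℂ)^1 + ((1/280) + (-7/2880)*(n:ℂ)^2 + (-1/4320)*(n:ℂ)^4 + (-1/60480)*(n:ℂ)^6) * (j:ℂ)^2 + ((7/1440)*(n:ℂ)^1) * (j:ℂ)^3 + ((-7/2880) + (1/864)*(n:ℂ)^2 + (1/17280)*(n:ℂ)^4) * (j:ℂ)^4 + ((-1/720)*(n:ℂ)^1) * (j:ℂ)^5 + ((1/2160) + (-1/8640)*(n:ℂ)^2) * (j:ℂ)^6 + ((1/10080)*(n:ℂ)^1) * (j:ℂ)^7 + ((-1/40320)) * (j:ℂ)^8)) = -((n:ℂ)/256) * ((3 * (n : ℂ) ^ 8 + 40 * n ^ 6 + 294 * n ^ 4 + 2160 * n ^ 2 - 2497) * 512 / 7257600) := by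
  have e1 : ∀ m : ℕ, (∑ j ∈ range m, (j:ℂ)^1) = (-1/2)*(m:ℂ)^1 + (1/2)*(m:ℂ)^2 := by
    intro m
    induction m with
    | zero => simp
    | succ m ih => rw [Finset.sum_range_succ, ih]; push_cast; ring
  have e2 : ∀ m : ℕ, (∑ j ∈ range m, (j:ℂ)^2) = (1/6)*(m:ℂ)^1 + (-1/2)*(m:ℂ)^2 + (1/3)*(m:ℂ)^3 := by
    intro m
    induction m with
    | zero => simp
    | succ m ih => rw [Finset.sum_range_succ, ih]; push_cast; ring
  have e3 : ∀ m : ℕ, (∑ j ∈ range m, (j:ℂ)^3) = (1/4)*(m:ℂ)^2 + (-1/2)*(m:ℂ)^3 + (1/4)*(m:ℂ)^4 := by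
    intro m
    induction m with
    | zero => simp
    | succ m ih => rw [Finset.sum_range_succ, ih]; push_cast; ring
  have e4 : ∀ m : ℕ, (∑ j ∈ range m, (j:ℂ)^4) = (-1/30)*(m:ℂ)^1 + (1/3)*(m:ℂ)^3 + (-1/2)*(m:ℂ)^4 + (1/5)*(m:ℂ)^5 := by
    intro m
    induction m with
    | zero => simp
    | succ m ih => rw [Finset.sum_range_succ, ih]; push_cast; ring
  have e5 : ∀ m : ℕ, (∑ j ∈ range m, (j:ℂ)^5) = (-1/12)*(m:ℂ)^2 + (5/12)*(m:ℂ)^4 + (-1/2)*(m:ℂ)^5 + (1/6)*(m:ℂ)^6 := by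
    intro m
    induction m with
    | zero => simp
    | succ m ih => rw [Finset.sum_range_succ, ih]; push_cast; ring
  have e6 : ∀ m : ℕ, (∑ j ∈ range m, (j:ℂ)^6) = (1/42)*(m:ℂ)^1 + (-1/6)*(m:ℂ)^3 + (1/2)*(m:ℂ)^5 + (-1/2)*(m:ℂ)^6 + (1/7)*(m:ℂ)^7 := by
    intro m
    induction m with
    | zero => simp
    | succ m ih => rw [Finset.sum_range_succ, ih]; push_cast; ring
  have e7 : ∀ m : ℕ, (∑ j ∈ range m, (j:ℂ)^7) = (1/12)*(m:ℂ)^2 + (-7/24)*(m:ℂ)^4 + (7/12)*(m:ℂ)^6 + (-1/2)*(m:ℂ)^7 + (1/8)*(m:ℂ)^8 := by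
    intro m
    induction m with
    | zero => simp
    | succ m ih => rw [Finset.sum_range_succ, ih]; push_cast; ring
  have e8 : ∀ m : ℕ, (∑ j ∈ range m, (j:ℂ)^8) = (-1/30)*(m:ℂ)^1 + (2/9)*(m:ℂ)^3 + (-7/15)*(m:ℂ)^5 + (2/3)*(m:ℂ)^7 + (-1/2)*(m:ℂ)^8 + (1/9)*(m:ℂ)^9 := by
    intro m
    induction m with
    | zero => simp
    | succ m ih => rw [Finset.sum_range_succ, ih]; push_cast; ring
  have e : (∑ j ∈ range n, (((-1/280)*(n:ℂ)^1) * (j:ℂ)^1 + ((1/280) + (-7/2880)*(n:ℂ)^2 + (-1/4320)*(n:ℂ)^4 + (-1/60480)*(n:ℂ)^6) * (j:ℂ)^2 + ((7/1440)*(n:ℂ)^1) * (j:ℂ)^3 + ((-7/2880) + (1/864)*(n:ℂ)^2 + (1/17280)*(n:ℂ)^4) * (j:ℂ)^4 + ((-1/720)*(n:ℂ)^1) * (j:ℂ)^5 + ((1/2160) + (-1/8640)*(n:ℂ)^2) * (j:ℂ)^6 + ((1/10080)*(n:ℂ)^1) * (j:ℂ)^7 + ((-1/40320)) * (j:ℂ)^8))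 = ((-1/280)*(n:ℂ)^1) * (∑ j ∈ range n, (j:ℂ)^1) + ((1/280) + (-7/2880)*(n:ℂ)^2 + (-1/4320)*(n:ℂ)^4 + (-1/60480)*(n:ℂ)^6) * (∑ j ∈ range n, (j:ℂ)^2) + ((7/1440)*(n:ℂ)^1) * (∑ j ∈ range n, (j:ℂ)^3) + ((-7/2880) + (1/864)*(n:ℂ)^2 + (1/17280)*(n:ℂ)^4) * (∑ j ∈ range n, (j:ℂ)^4) + ((-1/720)*(n:ℂ)^1) * (∑ j ∈ range n, (j:ℂ)^5) + ((1/2160) + (-1/8640)*(n:ℂ)^2) * (∑ j ∈ range n, (j:ℂ)^6) + ((1/10080)*(n:ℂ)^1) * (∑ j ∈ range n, (j:ℂ)^7) + ((-1/40320)) * (∑ j ∈ range n, (j:ℂ)^8) := by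
    simp only [Finset.mul_sum, ← Finset.sum_add_distrib]
  rw [e, e1, e2, e3, e4, e5, e6, e7, e8]
  ring

open Finset in
lemma aux_orth (ζ : ℂ) (n j : ℕ) (hζ : IsPrimitiveRoot ζ n) (hn : 0 < n) (h0 : j ≠ 0) (hj : j < n) :
    ∑ t ∈ Icc 1 (n-1), (ζ^t)^j = -1 := by
  have h1 : ζ^j ≠ 1 := hζ.pow_ne_one_of_pos_of_lt h0 hj
  have h := mul_neg_geom_sum (ζ^j) n
  rw [← pow_mul, mul_comm j n, pow_mul, hζ.pow_eq_one, one_pow, sub_self] at h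
  have h2 := (mul_eq_zero.mp h).resolve_left (sub_ne_zero.mpr (Ne.symm h1))
  have h3 : range n = insert 0 (Icc 1 (n-1)) := by
    ext x; simp only [mem_range, mem_insert, mem_Icc]; omega
  rw [h3, Finset.sum_insert (by simp)] at h2
  have h4 : ∑ t ∈ Icc 1 (n-1), (ζ^t)^j = ∑ t ∈ Icc 1 (n-1), (ζ^j)^t :=
    Finset.sum_congr rfl fun t _ => by rw [← pow_mul, ← pow_mul, mul_comm]
  rw [h4]
  rw [pow_zero] at h2
  linear_combination h2

open Finset in
lemma aux_sin_s10 (n t : ℕ) (hn : 0 < n) (ζ : ℂ) (hζ : ζ = Complex.exp (2 * π * Complex.I / n)) (u : ℂ)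
    (hu : u * (1 - ζ^t) = 1) :
    1 / Complex.sin (π * t / n) ^ 8 = 256 * (u^4*(u-1)^4) := by
  have hn' : (n:ℂ) ≠ 0 := by exact_mod_cast hn.ne'
  set w := Complex.exp ((π * t / n) * Complex.I) with hw
  have hz : ζ^t = w^2 := by
    rw [hζ, hw, ← Complex.exp_nat_mul, ← Complex.exp_nat_mul]
    congr 1; push_cast; ring
  have hs : Complex.sin (π * t / n) = (w⁻¹ - w) * Complex.I / 2 := by
    rw [Complex.sin, hw, ← Complex.exp_neg, neg_mul]
  have hw0 : w ≠ 0 := Complex.exp_ne_zero _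
  rw [hz] at hu
  have h1 : 1 - w^2 ≠ 0 := right_ne_zero_of_mul_eq_one hu
  have hs2 : Complex.sin (π * t / n) = (1 - w^2) * Complex.I / (2 * w) := by
    rw [hs]; field_simp
  have hu' : u = 1 / (1 - w^2) := eq_one_div_of_mul_eq_one_left hu
  have hu1 : u - 1 = w^2 / (1 - w^2) := by rw [hu']; field_simp; ring
  have hI : Complex.I ^ 8 = 1 := by
    rw [show 8 = 4 * 2 from rfl, pow_mul, Complex.I_pow_four, one_pow]
  rw [hs2, hu1, hu', div_pow, mul_pow, hI]
  field_simp
  ring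

theorem stmt_10 (p : ℕ) (hp : p.Prime) (hodd : Odd p) (hp8 : 8 < p) :
    ((p : ℝ) ^ 4 / 2 ^ 9) * ∑ θ ∈ Finset.Icc 1 (p - 1), 1 / Real.sin (π * θ / p) ^ 8 =
      (3 * (p : ℝ) ^ 12 + 40 * p ^ 10 + 294 * p ^ 8 + 2160 * p ^ 6 - 2497 * p ^ 4)
        / 7257600 := by
  have hn : 0 < p := by omega
  have hn' : (p:ℂ) ≠ 0 := by exact_mod_cast hn.ne'
  obtain ⟨ζ, hζ⟩ : ∃ ζ : ℂ, ζ = Complex.exp (2 * π * Complex.I / p) := ⟨_, rfl⟩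
  have hprim : IsPrimitiveRoot ζ p := hζ ▸ Complex.isPrimitiveRoot_exp p hn.ne'
  have key : (p:ℂ) * ∑ θ ∈ Finset.Icc 1 (p - 1), 1 / Complex.sin (π * θ / p) ^ 8 =
      p * ((3 * (p : ℂ) ^ 8 + 40 * p ^ 6 + 294 * p ^ 4 + 2160 * p ^ 2 - 2497) * 512 / 7257600) := by
    have hc := aux_csum p
    have hk := fun z u hz hu => aux_key z u p hz hu
    obtain ⟨f, hf⟩ : ∃ f : ℕ → ℂ, f = fun j : ℕ => ((-1/280)*(p:ℂ)^1) * (j:ℂ)^1 + ((1/280) + (-7/2880)*(p:ℂ)^2 + (-1/4320)*(p:ℂ)^4 + (-1/60480)*(p:ℂ)^6) * (j:ℂ)^2 + ((7/1440)*(p:ℂ)^1) * (j:ℂ)^3 + ((-7/2880) + (1/864)*(p:ℂ)^2 + (1/17280)*(p:ℂ)^4) * (j:ℂ)^4 + ((-1/720)*(p:ℂ)^1) * (j:ℂ)^5 + ((1/2160) + (-1/8640)*(p:ℂ)^2) * (j:ℂ)^6 + ((1/10080)*(p:ℂ)^1) * (j:ℂ)^7 + ((-1/40320)) * (j:ℂ)^8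 := ⟨_, rfl⟩
    have hf0 : f 0 = 0 := by rw [hf]; simp
    replace hc : ∑ j ∈ Finset.range p, f j = -((p:ℂ)/256) * ((3 * (p : ℂ) ^ 8 + 40 * p ^ 6 + 294 * p ^ 4 + 2160 * p ^ 2 - 2497) * 512 / 7257600) := by rw [hf]; exact hc
    replace hk : ∀ z u : ℂ, z ^ p = 1 → u * (1 - z) = 1 → (p:ℂ) * (u^4*(u-1)^4) = ∑ j ∈ Finset.range p, f j * z^j := by
      rw [hf]; exact hk
    clear hf
    have h1 : ∀ θ ∈ Finset.Icc 1 (p - 1), (p:ℂ) * (1 / Complex.sin (π * θ / p) ^ 8) =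
        256 * ∑ j ∈ Finset.range p, f j * (ζ^θ)^j := by
      intro θ hθ
      rw [Finset.mem_Icc] at hθ
      have hz1 : ζ^θ ≠ 1 := hprim.pow_ne_one_of_pos_of_lt (by omega) (by omega)
      have hu : (1 - ζ^θ)⁻¹ * (1 - ζ^θ) = 1 := inv_mul_cancel₀ (sub_ne_zero.mpr hz1.symm)
      rw [← hk _ _ (by rw [← pow_mul, mul_comm, pow_mul, hprim.pow_eq_one, one_pow]) hu,
        aux_sin_s10 p θ hn ζ hζ _ hu]
      ring
    rw [Finset.mul_sum, Finset.sum_congr rfl h1, ← Finset.mul_sum, Finset.sum_comm]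
    have h2 : ∀ j ∈ Finset.range p, ∑ θ ∈ Finset.Icc 1 (p - 1), f j * (ζ^θ)^j = - f j := by
      intro j hj
      rw [← Finset.mul_sum]
      by_cases h0 : j = 0
      · subst h0; rw [hf0]; simp
      · rw [aux_orth ζ p j hprim hn h0 (Finset.mem_range.mp hj)]; ring
    rw [Finset.sum_congr rfl h2, Finset.sum_neg_distrib, hc]
    ring
  have key2 := mul_left_cancel₀ hn' key
  have key3 : ∑ θ ∈ Finset.Icc 1 (p - 1), 1 / Real.sin (π * θ / p) ^ 8 =
      ((3 * (p : ℝ) ^ 8 + 40 * p ^ 6 + 294 * p ^ 4 + 2160 * p ^ 2 - 2497) * 512 / 7257600) := by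
    have := key2
    exact_mod_cast this
  rw [key3]
  ring
end

section
/- Let p be an odd prime with p > 10. Then (p^5/2^11) · Σ_{θ=1}^{p-1} 1/sin^10(πθ/p) = (1/2048) · ((2/93555)p^15 + (1/2835)p^13 + (26/8505)p^11 + (164/8505)p^9 + (128/945)p^7 - (14797/93555)p^5). (This is the genus-6 case of the degree formula of Corollary 5.4.) -/
open Real

lemma step_aux (p : ℕ) (S T P Q : ℕ → ℝ) (hp : 0 < p)
    (hS : ∀ j, S (j+2) - 2 * S (j+1) + S j = - T (j+1))
    (hP : ∀ j, j + 1 < p → P (j+2) - 2 * P (j+1) + P j = - T (j+1))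
    (hSp : S p = S 0) (hPp : P p = P 0)
    (hs : ∑ j ∈ Finset.range p, S j = 0)
    (hQ : ∀ j, Q (j+1) - Q j = P j) (hQp : Q p = Q 0) :
    ∀ j, j ≤ p → S j = P j := by
  have key : ∀ j, j + 1 ≤ p → S (j+1) - P (j+1) = (S j - P j) + ((S 1 - P 1) - (S 0 - P 0)) := by
    intro j
    induction j with
    | zero => intro _; simp
    | succ k ih =>
      intro hk
      have h1 := ih (by omega)
      have h2 := hS k
      have h3 := hP k (by omega)
      have e : k + 1 + 1 = k + 2 := rfl
      rw [e]
      linarith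
  have lin : ∀ j, j ≤ p → S j - P j = (S 0 - P 0) + j * ((S 1 - P 1) - (S 0 - P 0)) := by
    intro j
    induction j with
    | zero => intro _; simp
    | succ k ih =>
      intro hk
      have h1 := ih (by omega)
      have h2 := key k hk
      push_cast
      linarith
  have hd : (S 1 - P 1) - (S 0 - P 0) = 0 := by
    have h := lin p le_rfl
    have hp' : (p : ℝ) ≠ 0 := by positivity
    have : (p : ℝ) * ((S 1 - P 1) - (S 0 - P 0)) = 0 := by linarith
    exact (mul_eq_zero.mp this).resolve_left hp'
  have con : ∀ j, j ≤ p → S j - P j = S 0 - P 0 := by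
    intro j hj
    rw [lin j hj, hd]; simp
  have hsP : ∑ j ∈ Finset.range p, P j = 0 := by
    rw [← Finset.sum_congr rfl (fun j _ => hQ j), Finset.sum_range_sub]
    linarith
  have h0 : (p : ℝ) * (S 0 - P 0) = 0 := by
    have : ∑ j ∈ Finset.range p, (S j - P j) = ∑ j ∈ Finset.range p, (S 0 - P 0) :=
      Finset.sum_congr rfl (fun j hj => con j (Finset.mem_range.mp hj).le)
    rw [Finset.sum_sub_distrib, hs, hsP] at this
    rw [Finset.sum_const, Finset.card_range, nsmul_eq_mul] at this
    linarith
  have hp' : (p : ℝ) ≠ 0 := by positivity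
  have h00 := (mul_eq_zero.mp h0).resolve_left hp'
  intro j hj
  have := con j hj
  linarith

lemma sin_ne_aux (p t : ℕ) (h0 : 0 < t) (h1 : t < p) : Real.sin (π * t / p) ≠ 0 := by
  have hp : (0:ℝ) < p := by exact_mod_cast (h0.trans h1)
  have ht : (0:ℝ) < t := by exact_mod_cast h0
  apply ne_of_gt
  apply Real.sin_pos_of_pos_of_lt_pi
  · positivity
  · rw [div_lt_iff₀ hp]
    have : (t:ℝ) < p := by exact_mod_cast h1
    exact mul_lt_mul_of_pos_left this Real.pi_pos

lemma cos_sum_aux (p t : ℕ) (h0 : 0 < t) (h1 : t < p) :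
    ∑ j ∈ Finset.range p, Real.cos (2 * (j * (π * t / p))) = 0 := by
  have hp : (p:ℝ) ≠ 0 := by
    have : 0 < p := by omega
    positivity
  have hs := sin_ne_aux p t h0 h1
  set x := π * t / p with hx
  have hpx : p * x = t * π := by rw [hx]; field_simp
  have : (2 * Real.sin x) * ∑ j ∈ Finset.range p, Real.cos (2 * (j * x)) = 0 := by
    rw [Finset.mul_sum]
    have e : ∀ j ∈ Finset.range p, (2 * Real.sin x) * Real.cos (2 * (j * x)) =
        (fun j : ℕ => Real.sin (2 * (j * x) - x)) (j+1) - (fun j : ℕ => Real.sin (2 * (j * x) - x)) j := by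
      intro j _
      have e1 : 2 * (((j+1 : ℕ):ℝ) * x) - x = 2 * (j * x) + x := by push_cast; ring
      simp only [e1, Real.sin_add, Real.sin_sub]
      ring
    rw [Finset.sum_congr rfl e, Finset.sum_range_sub (fun j : ℕ => Real.sin (2 * (j * x) - x)) p]
    have e2 : 2 * (p * x) - x = - x + t * (2 * π) := by rw [hpx]; ring
    simp only [e2, Real.sin_add_nat_mul_two_pi]
    simp
  exact (mul_eq_zero.mp this).resolve_left (by positivity)

noncomputable def SS (p n j : ℕ) : ℝ :=
  ∑ t ∈ Finset.Icc 1 (p - 1), Real.cos (2 * (j * (π * t / p))) / (4 * Real.sin (π * t / p) ^ 2) ^ n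

lemma SS_rec (p n j : ℕ) :
    SS p (n+1) (j+2) - 2 * SS p (n+1) (j+1) + SS p (n+1) j = - SS p n (j+1) := by
  unfold SS
  rw [Finset.mul_sum, ← Finset.sum_sub_distrib, ← Finset.sum_add_distrib, ← Finset.sum_neg_distrib]
  apply Finset.sum_congr rfl
  intro t ht
  rw [Finset.mem_Icc] at ht
  have hs := sin_ne_aux p t (by omega) (by omega)
  set x := π * t / p
  have e1 : 2 * (((j+2 : ℕ):ℝ) * x) = 2 * (((j+1 : ℕ):ℝ) * x) + 2 * x := by push_cast; ring
  have e2 : 2 * ((j:ℝ) * x) = 2 * (((j+1 : ℕ):ℝ) * x) - 2 * x := by push_cast; ring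
  rw [e1, e2, Real.cos_add, Real.cos_sub, pow_succ]
  have hc : Real.cos (2 * x) = 1 - 2 * Real.sin x ^ 2 := by
    rw [Real.cos_two_mul, Real.cos_sq']; ring
  rw [hc]
  field_simp
  ring

lemma SS_per (p n : ℕ) (hp : 0 < p) : SS p n p = SS p n 0 := by
  unfold SS
  apply Finset.sum_congr rfl
  intro t _
  have hp' : (p:ℝ) ≠ 0 := by positivity
  have : 2 * ((p:ℝ) * (π * t / p)) = 0 + t * (2 * π) := by field_simp; ring
  rw [this, Real.cos_add_nat_mul_two_pi]
  simp

lemma SS_sum (p n : ℕ) : ∑ j ∈ Finset.range p, SS p n j = 0 := by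
  unfold SS
  rw [Finset.sum_comm]
  apply Finset.sum_eq_zero
  intro t ht
  rw [Finset.mem_Icc] at ht
  rw [← Finset.sum_div, cos_sum_aux p t (by omega) (by omega), zero_div]

lemma SS_zero (p j : ℕ) (h0 : 0 < j) (h1 : j < p) : SS p 0 j = -1 := by
  have h := cos_sum_aux p j h0 h1
  have e : Finset.range p = insert 0 (Finset.Icc 1 (p-1)) := by
    ext a; simp; omega
  rw [e, Finset.sum_insert (by simp)] at h
  simp only [Nat.cast_zero, zero_mul, mul_zero, Real.cos_zero] at h
  unfold SS
  have : ∀ t ∈ Finset.Icc 1 (p-1), Real.cos (2 * (j * (π * t / p))) / (4 * Real.sin (π * t / p) ^ 2) ^ 0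
      = Real.cos (2 * (t * (π * j / p))) := by
    intro t _
    rw [pow_zero, div_one]
    congr 1; ring
  rw [Finset.sum_congr rfl this]
  linarith

noncomputable def PP1_ (p j : ℝ) : ℝ := (-1/12)*j^0*p^0 + (1/12)*j^0*p^2 + (-1/2)*j^1*p^1 + (1/2)*j^2*p^0

noncomputable def QQ1_ (p j : ℝ) : ℝ := (1/4)*j^1*p^1 + (1/12)*j^1*p^2 + (-1/4)*j^2*p^0 + (-1/4)*j^2*p^1 + (1/6)*j^3*p^0

lemma SS_1_ (p : ℕ) (hp : 0 < p) : ∀ j, j ≤ p → SS p 1 j = PP1_ p j := by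
  refine step_aux p (SS p 1) (SS p 0) (fun j => PP1_ p j) (fun j => QQ1_ p j) hp
    (SS_rec p 0) ?_ (SS_per p 1 hp) ?_ (SS_sum p 1) ?_ ?_
  · intro j hj
    rw [SS_zero p (j+1) (by omega) hj]
    simp only [PP1_]
    push_cast
    ring
  · simp only [PP1_]
    push_cast
    ring
  · intro j
    simp only [PP1_, QQ1_]
    push_cast
    ring
  · simp only [QQ1_]
    push_cast
    ring

noncomputable def PP2_ (p j : ℝ) : ℝ := (-11/720)*j^0*p^0 + (1/72)*j^0*p^2 + (1/720)*j^0*p^4 + (-1/12)*j^1*p^1 + (1/12)*j^2*p^0 + (-1/24)*j^2*p^2 + (1/12)*j^3*p^1 + (-1/24)*j^4*p^0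

noncomputable def QQ2_ (p j : ℝ) : ℝ := (1/24)*j^1*p^1 + (1/144)*j^1*p^2 + (1/720)*j^1*p^4 + (-1/24)*j^2*p^0 + (-1/48)*j^2*p^1 + (1/48)*j^2*p^2 + (1/72)*j^3*p^0 + (-1/24)*j^3*p^1 + (-1/72)*j^3*p^2 + (1/48)*j^4*p^0 + (1/48)*j^4*p^1 + (-1/120)*j^5*p^0

lemma SS_2_ (p : ℕ) (hp : 0 < p) : ∀ j, j ≤ p → SS p 2 j = PP2_ p j := by
  refine step_aux p (SS p 2) (SS p 1) (fun j => PP2_ p j) (fun j => QQ2_ p j) hp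
    (SS_rec p 1) ?_ (SS_per p 2 hp) ?_ (SS_sum p 2) ?_ ?_
  · intro j hj
    rw [SS_1_ p hp (j+1) hj.le]
    simp only [PP2_, PP1_]
    push_cast
    ring
  · simp only [PP2_]
    push_cast
    ring
  · intro j
    simp only [PP2_, QQ2_]
    push_cast
    ring
  · simp only [QQ2_]
    push_cast
    ring

noncomputable def PP3_ (p j : ℝ) : ℝ := (-191/60480)*j^0*p^0 + (1/360)*j^0*p^2 + (1/2880)*j^0*p^4 + (1/30240)*j^0*p^6 + (-1/60)*j^1*p^1 + (1/60)*j^2*p^0 + (-1/96)*j^2*p^2 + (-1/1440)*j^2*p^4 + (1/48)*j^3*p^1 + (-1/96)*j^4*p^0 + (1/288)*j^4*p^2 + (-1/240)*j^5*p^1 + (1/720)*j^6*p^0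

noncomputable def QQ3_ (p j : ℝ) : ℝ := (1/120)*j^1*p^1 + (1/1080)*j^1*p^2 + (1/4320)*j^1*p^4 + (1/30240)*j^1*p^6 + (-1/120)*j^2*p^0 + (-1/360)*j^2*p^1 + (1/192)*j^2*p^2 + (1/2880)*j^2*p^4 + (1/540)*j^3*p^0 + (-1/96)*j^3*p^1 + (-1/432)*j^3*p^2 + (-1/4320)*j^3*p^4 + (1/192)*j^4*p^0 + (1/288)*j^4*p^1 + (-1/576)*j^4*p^2 + (-1/720)*j^5*p^0 + (1/480)*j^5*p^1 + (1/1440)*j^5*p^2 + (-1/1440)*j^6*p^0 + (-1/1440)*j^6*p^1 + (1/5040)*j^7*p^0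

lemma SS_3_ (p : ℕ) (hp : 0 < p) : ∀ j, j ≤ p → SS p 3 j = PP3_ p j := by
  refine step_aux p (SS p 3) (SS p 2) (fun j => PP3_ p j) (fun j => QQ3_ p j) hp
    (SS_rec p 2) ?_ (SS_per p 3 hp) ?_ (SS_sum p 3) ?_ ?_
  · intro j hj
    rw [SS_2_ p hp (j+1) hj.le]
    simp only [PP3_, PP2_]
    push_cast
    ring
  · simp only [PP3_]
    push_cast
    ring
  · intro j
    simp only [PP3_, QQ3_]
    push_cast
    ring
  · simp only [QQ3_]
    push_cast
    ring

noncomputable def PP4_ (p j : ℝ) : ℝ := (-2497/3628800)*j^0*p^0 + (1/1680)*j^0*p^2 + (7/86400)*j^0*p^4 + (1/90720)*j^0*p^6 + (1/1209600)*j^0*p^8 + (-1/280)*j^1*p^1 + (1/280)*j^2*p^0 + (-7/2880)*j^2*p^2 + (-1/4320)*j^2*p^4 + (-1/60480)*j^2*p^6 + (7/1440)*j^3*p^1 + (-7/2880)*j^4*p^0 + (1/864)*j^4*p^2 + (1/17280)*j^4*p^4 + (-1/720)*j^5*p^1 + (1/2160)*j^6*p^0 + (-1/8640)*j^6*p^2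 + (1/10080)*j^7*p^1 + (-1/40320)*j^8*p^0

noncomputable def QQ4_ (p j : ℝ) : ℝ := (1/560)*j^1*p^1 + (1/6720)*j^1*p^2 + (7/172800)*j^1*p^4 + (1/120960)*j^1*p^6 + (1/1209600)*j^1*p^8 + (-1/560)*j^2*p^0 + (-1/2240)*j^2*p^1 + (7/5760)*j^2*p^2 + (1/8640)*j^2*p^4 + (1/120960)*j^2*p^6 + (1/3360)*j^3*p^0 + (-7/2880)*j^3*p^1 + (-7/17280)*j^3*p^2 + (-1/17280)*j^3*p^4 + (-1/181440)*j^3*p^6 + (7/5760)*j^4*p^0 + (7/11520)*j^4*p^1 + (-1/1728)*j^4*p^2 + (-1/34560)*j^4*p^4 + (-7/28800)*j^5*p^0 + (1/1440)*j^5*p^1 + (1/5760)*j^5*p^2 + (1/86400)*j^5*p^4 + (-1/4320)*j^6*p^0 + (-1/5760)*j^6*p^1 + (1/17280)*j^6*p^2 + (1/20160)*j^7*p^0 + (-1/20160)*j^7*p^1 + (-1/60480)*j^7*p^2 + (1/80640)*j^8*p^0 + (1/80640)*j^8*p^1 + (-1/362880)*j^9*p^0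

lemma SS_4_ (p : ℕ) (hp : 0 < p) : ∀ j, j ≤ p → SS p 4 j = PP4_ p j := by
  refine step_aux p (SS p 4) (SS p 3) (fun j => PP4_ p j) (fun j => QQ4_ p j) hp
    (SS_rec p 3) ?_ (SS_per p 4 hp) ?_ (SS_sum p 4) ?_ ?_
  · intro j hj
    rw [SS_3_ p hp (j+1) hj.le]
    simp only [PP4_, PP3_]
    push_cast
    ring
  · simp only [PP4_]
    push_cast
    ring
  · intro j
    simp only [PP4_, QQ4_]
    push_cast
    ring
  · simp only [QQ4_]
    push_cast
    ring

noncomputable def PP5_ (p j : ℝ) : ℝ := (-14797/95800320)*j^0*p^0 + (1/7560)*j^0*p^2 + (41/2177280)*j^0*p^4 + (13/4354560)*j^0*p^6 + (1/2903040)*j^0*p^8 + (1/47900160)*j^0*p^10 + (-1/1260)*j^1*p^1 + (1/1260)*j^2*p^0 + (-41/72576)*j^2*p^2 + (-13/207360)*j^2*p^4 + (-1/145152)*j^2*p^6 + (-1/2419200)*j^2*p^8 + (41/36288)*j^3*p^1 + (-41/72576)*j^4*p^0 + (13/41472)*j^4*p^2 + (1/41472)*j^4*p^4 + (1/725760)*j^4*p^6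 + (-13/34560)*j^5*p^1 + (13/103680)*j^6*p^0 + (-1/20736)*j^6*p^2 + (-1/518400)*j^6*p^4 + (1/24192)*j^7*p^1 + (-1/96768)*j^8*p^0 + (1/483840)*j^8*p^2 + (-1/725760)*j^9*p^1 + (1/3628800)*j^10*p^0

noncomputable def QQ5_ (p j : ℝ) : ℝ := (1/2520)*j^1*p^1 + (1/37800)*j^1*p^2 + (41/5443200)*j^1*p^4 + (13/7257600)*j^1*p^6 + (1/3628800)*j^1*p^8 + (1/47900160)*j^1*p^10 + (-1/2520)*j^2*p^0 + (-1/12600)*j^2*p^1 + (41/145152)*j^2*p^2 + (13/414720)*j^2*p^4 + (1/290304)*j^2*p^6 + (1/4838400)*j^2*p^8 + (1/18900)*j^3*p^0 + (-41/72576)*j^3*p^1 + (-41/544320)*j^3*p^2 + (-13/1036800)*j^3*p^4 + (-1/544320)*j^3*p^6 + (-1/7257600)*j^3*p^8 + (41/145152)*j^4*p^0 + (41/362880)*j^4*p^1 + (-13/82944)*j^4*p^2 + (-1/82944)*j^4*p^4 + (-1/1451520)*j^4*p^6 + (-41/907200)*j^5*p^0 + (13/69120)*j^5*p^1 + (13/345600)*j^5*p^2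 + (1/259200)*j^5*p^4 + (1/3628800)*j^5*p^6 + (-13/207360)*j^6*p^0 + (-13/345600)*j^6*p^1 + (1/41472)*j^6*p^2 + (1/1036800)*j^6*p^4 + (13/1209600)*j^7*p^0 + (-1/48384)*j^7*p^1 + (-1/181440)*j^7*p^2 + (-1/3628800)*j^7*p^4 + (1/193536)*j^8*p^0 + (1/241920)*j^8*p^1 + (-1/967680)*j^8*p^2 + (-1/1088640)*j^9*p^0 + (1/1451520)*j^9*p^1 + (1/4354560)*j^9*p^2 + (-1/7257600)*j^10*p^0 + (-1/7257600)*j^10*p^1 + (1/39916800)*j^11*p^0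

lemma SS_5_ (p : ℕ) (hp : 0 < p) : ∀ j, j ≤ p → SS p 5 j = PP5_ p j := by
  refine step_aux p (SS p 5) (SS p 4) (fun j => PP5_ p j) (fun j => QQ5_ p j) hp
    (SS_rec p 4) ?_ (SS_per p 5 hp) ?_ (SS_sum p 5) ?_ ?_
  · intro j hj
    rw [SS_4_ p hp (j+1) hj.le]
    simp only [PP5_, PP4_]
    push_cast
    ring
  · simp only [PP5_]
    push_cast
    ring
  · intro j
    simp only [PP5_, QQ5_]
    push_cast
    ring
  · simp only [QQ5_]
    push_cast
    ring

theorem stmt_11 (p : ℕ) (hp : p.Prime) (hodd : Odd p) (hp10 : 10 < p) :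
    ((p : ℝ) ^ 5 / 2 ^ 11) * ∑ θ ∈ Finset.Icc 1 (p - 1), 1 / Real.sin (π * θ / p) ^ 10 =
      (1 / 2048) * ((2 / 93555) * (p : ℝ) ^ 15 + (1 / 2835) * p ^ 13 +
        (26 / 8505) * p ^ 11 + (164 / 8505) * p ^ 9 + (128 / 945) * p ^ 7 -
        (14797 / 93555) * p ^ 5) := by
  have h := SS_5_ p (by omega) 0 (by omega)
  have e : ∑ θ ∈ Finset.Icc 1 (p - 1), 1 / Real.sin (π * θ / p) ^ 10 = 1024 * SS p 5 0 := by
    unfold SS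
    rw [Finset.mul_sum]
    apply Finset.sum_congr rfl
    intro t ht
    rw [Finset.mem_Icc] at ht
    have hs := sin_ne_aux p t (by omega) (by omega)
    simp only [Nat.cast_zero, zero_mul, mul_zero, Real.cos_zero]
    field_simp
    norm_num
  rw [e, h]
  simp only [PP5_]
  push_cast
  ring
end

section
/- Let p be an odd prime with p > 12. Then (p^6/2^13) · Σ_{θ=1}^{p-1} 1/sin^12(πθ/p) = (1/8192) · ((1382/638512875)p^18 + (4/93555)p^16 + (31/70875)p^14 + (556/178605)p^12 + (3832/212625)p^10 + (256/2079)p^8 - (92427157/638512875)p^6). (This is the genus-7 case of the degree formula of Corollary 5.4.) -/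
open Real

lemma aux_newton (s : Finset ℕ) (y : ℕ → ℝ) (c S : ℕ → ℝ)
    (hc : ∀ k, c k = (∏ i ∈ s, (1 - Polynomial.C (y i) * Polynomial.X) : Polynomial ℝ).coeff k)
    (hS : ∀ k, S k = ∑ i ∈ s, y i ^ k) :
    c 0 = 1 ∧ c 1 + S 1 = 0 ∧ 2 * c 2 + c 1 * S 1 + S 2 = 0 ∧
    3 * c 3 + c 2 * S 1 + c 1 * S 2 + S 3 = 0 ∧
    4 * c 4 + c 3 * S 1 + c 2 * S 2 + c 1 * S 3 + S 4 = 0 ∧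
    5 * c 5 + c 4 * S 1 + c 3 * S 2 + c 2 * S 3 + c 1 * S 4 + S 5 = 0 ∧
    6 * c 6 + c 5 * S 1 + c 4 * S 2 + c 3 * S 3 + c 2 * S 4 + c 1 * S 5 + S 6 = 0 := by
  induction s using Finset.induction_on generalizing c S with
  | empty =>
    simp [Polynomial.coeff_one] at hc hS
    simp [hc, hS]
  | insert a s ha ih =>
    obtain ⟨h0, h1, h2, h3, h4, h5, h6⟩ := ih _ _ (fun k => rfl) (fun k => rfl)
    have hS' : ∀ k, S k = y a ^ k + ∑ i ∈ s, y i ^ k := by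
      intro k; rw [hS, Finset.sum_insert ha]
    generalize hP : (∏ i ∈ s, (1 - Polynomial.C (y i) * Polynomial.X) : Polynomial ℝ) = P at *
    have hc0 : c 0 = P.coeff 0 := by
      rw [hc, Finset.prod_insert ha, hP, sub_mul, one_mul, mul_assoc]
      simp
    have hc' : ∀ k, c (k+1) = P.coeff (k+1) - y a * P.coeff k := by
      intro k
      rw [hc, Finset.prod_insert ha, hP, sub_mul, one_mul, mul_assoc]
      simp
    have e1 := hc' 0
    have e2 := hc' 1
    have e3 := hc' 2
    have e4 := hc' 3
    have e5 := hc' 4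
    have e6 := hc' 5
    norm_num at e1 e2 e3 e4 e5 e6
    rw [hc0, e1, e2, e3, e4, e5, e6]
    simp only [hS']
    generalize y a = t at *
    rw [h0] at *
    refine ⟨rfl, ?_, ?_, ?_, ?_, ?_, ?_⟩
    · linear_combination h1
    · linear_combination h2 - t * h1
    · linear_combination h3 - t * h2
    · linear_combination h4 - t * h3
    · linear_combination h5 - t * h4
    · linear_combination h6 - t * h5

noncomputable def auxQ : ℕ → Polynomial ℝ
  | 0 => 1
  | 1 => 3 - 4 * Polynomial.X
  | (m+2) => 2 * auxQ (m+1) - 4 * (Polynomial.X * auxQ (m+1)) - auxQ m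

lemma auxQ_sin (t : ℝ) (m : ℕ) :
    Real.sin ((2 * m + 1) * t) = Real.sin t * (auxQ m).eval (Real.sin t ^ 2) := by
  induction m using Nat.twoStepInduction with
  | zero => simp [auxQ]
  | one =>
    simp only [auxQ]
    have := Real.sin_three_mul t
    norm_num
    rw [this]; ring
  | more m h0 h1 =>
    have key : Real.sin ((2 * ((m + 2 : ℕ):ℝ) + 1) * t) = 2 * Real.cos (2 * t) *
        Real.sin ((2 * ((m + 1 : ℕ):ℝ) + 1) * t) - Real.sin ((2 * m + 1) * t) := by
      have a1 : (2 * ((m + 2 : ℕ):ℝ) + 1) * t = (2 * ((m + 1 : ℕ):ℝ) + 1) * t + 2 * t := by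
        push_cast; ring
      have a2 : (2 * (m:ℝ) + 1) * t = (2 * ((m + 1 : ℕ):ℝ) + 1) * t - 2 * t := by
        push_cast; ring
      rw [a1, a2, Real.sin_add, Real.sin_sub]; ring
    rw [key, h0, h1, Real.cos_two_mul, Real.cos_sq']
    simp only [auxQ]
    simp
    ring

lemma auxQ_deg (m : ℕ) : (auxQ m).natDegree ≤ m := by
  induction m using Nat.twoStepInduction with
  | zero => simp [auxQ]
  | one => simp only [auxQ]; compute_degree
  | more m h0 h1 =>
    simp only [auxQ]
    have h2 : (Polynomial.X * auxQ (m+1)).natDegree ≤ m + 2 :=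
      Polynomial.natDegree_mul_le.trans (by simp; omega)
    refine (Polynomial.natDegree_sub_le_of_le (m := m + 2) (n := m + 2) ((Polynomial.natDegree_sub_le_of_le (m := m + 2) (n := m + 2) ?_ ?_).trans (by simp)) (by omega)).trans (by simp)
    · refine Polynomial.natDegree_mul_le.trans ?_
      rw [show (2 : Polynomial ℝ).natDegree = 0 from Polynomial.natDegree_ofNat 2]; omega
    · refine Polynomial.natDegree_mul_le.trans ?_
      rw [show (4 : Polynomial ℝ).natDegree = 0 from Polynomial.natDegree_ofNat 4]; omega

lemma auxQ_rec0 (m : ℕ) : (auxQ (m+2)).coeff 0 = 2 * (auxQ (m+1)).coeff 0 - (auxQ m).coeff 0 := by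
  simp [auxQ]

lemma auxQ_rec (m k : ℕ) : (auxQ (m+2)).coeff (k+1) = 2 * (auxQ (m+1)).coeff (k+1)
    - 4 * (auxQ (m+1)).coeff k - (auxQ m).coeff (k+1) := by
  have h2 : (2 : Polynomial ℝ) = Polynomial.C 2 := rfl
  have h4 : (4 : Polynomial ℝ) = Polynomial.C 4 := rfl
  rw [auxQ, h2, h4]
  simp only [Polynomial.coeff_sub, Polynomial.coeff_C_mul, Polynomial.coeff_X_mul]

noncomputable def auxR (q : ℝ) : ℕ → ℝ
  | 0 => q
  | (k+1) => - auxR q k * (q^2 - (2*k+1)^2) / ((2*k+2)*(2*k+3))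

lemma auxQ_coeff (m : ℕ) : ∀ k ≤ 6, (auxQ m).coeff k = auxR (2*m+1) k := by
  induction m using Nat.twoStepInduction with
  | zero =>
    intro k hk
    interval_cases k <;> simp [auxQ, auxR, Polynomial.coeff_one]
  | one =>
    have h3 : (3 : Polynomial ℝ) = Polynomial.C 3 := rfl
    have h4 : (4 : Polynomial ℝ) = Polynomial.C 4 := rfl
    intro k hk
    simp only [auxQ]
    rw [h3, h4]
    interval_cases k <;> simp only [auxR, Polynomial.coeff_sub, Polynomial.coeff_C_mul, Polynomial.coeff_X, Polynomial.coeff_C] <;> norm_num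
  | more m h0 h1 =>
    intro k hk
    rcases k with _ | k
    · rw [auxQ_rec0, h0 0 hk, h1 0 hk]
      simp only [auxR]; push_cast; ring
    · rw [auxQ_rec, h0 _ hk, h1 _ hk, h1 k (by omega)]
      have : k ≤ 5 := by omega
      interval_cases k <;> simp only [auxR] <;> push_cast <;> ring

lemma aux_inj (m : ℕ) : Set.InjOn (fun i : ℕ => Real.sin (π * i / (2*m+1)) ^ 2)
    (Finset.range (m+1) : Finset ℕ) := by
  intro i hi j hj h
  simp only [Finset.coe_range, Set.mem_Iio] at hi hj
  have hm : (0:ℝ) < 2*m+1 := by positivity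
  have hb : ∀ i : ℕ, i < m+1 → 0 ≤ π * i / (2*m+1) ∧ π * i / (2*m+1) ≤ π/2 := by
    intro i hi
    refine ⟨by positivity, ?_⟩
    rw [div_le_div_iff₀ hm (by norm_num)]
    have : (i:ℝ) ≤ m := by exact_mod_cast Nat.lt_succ_iff.mp hi
    nlinarith [Real.pi_pos]
  have hs : ∀ i : ℕ, i < m+1 → 0 ≤ Real.sin (π * i / (2*m+1)) := fun i hi =>
    Real.sin_nonneg_of_nonneg_of_le_pi (hb i hi).1 (by linarith [(hb i hi).2, Real.pi_pos])
  have h' := (pow_left_inj₀ (hs i hi) (hs j hj) two_ne_zero).mp h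
  have h2 := Real.injOn_sin ⟨by linarith [(hb i hi).1, Real.pi_pos], (hb i hi).2⟩
    ⟨by linarith [(hb j hj).1, Real.pi_pos], (hb j hj).2⟩ h'
  have hp := Real.pi_ne_zero
  field_simp at h2
  exact_mod_cast h2

lemma aux_sin_pos (m i : ℕ) (h0 : 1 ≤ i) (h : i ≤ 2*m) : 0 < Real.sin (π * i / (2*m+1)) := by
  have hm : (0:ℝ) < 2*m+1 := by positivity
  have h0' : (1:ℝ) ≤ i := by exact_mod_cast h0
  have h' : (i:ℝ) ≤ 2*m := by exact_mod_cast h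
  apply Real.sin_pos_of_pos_of_lt_pi
  · have := Real.pi_pos
    positivity
  · rw [div_lt_iff₀ hm]
    nlinarith [Real.pi_pos]

lemma auxQ_prod (m : ℕ) : auxQ m = Polynomial.C (2*(m:ℝ)+1) * ∏ i ∈ Finset.Icc 1 m,
    (1 - Polynomial.C ((Real.sin (π * i / (2*m+1)) ^ 2)⁻¹) * Polynomial.X) := by
  have hm : (0:ℝ) < 2*m+1 := by positivity
  rw [← sub_eq_zero]
  apply Polynomial.eq_zero_of_natDegree_lt_card_of_eval_eq_zero' _
    ((Finset.range (m+1)).image (fun i : ℕ => Real.sin (π * i / (2*m+1)) ^ 2))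
  · intro x hx
    obtain ⟨i, hi, rfl⟩ := Finset.mem_image.mp hx
    rw [Finset.mem_range] at hi
    rcases Nat.eq_zero_or_pos i with rfl | hi0
    · have := auxQ_coeff m 0 (by norm_num)
      simp only [auxR] at this
      simp [Polynomial.eval_prod, ← Polynomial.coeff_zero_eq_eval_zero, this]
    · have hs := aux_sin_pos m i hi0 (by omega)
      have h1 := auxQ_sin (π * i / (2*m+1)) m
      have h2 : (2*(m:ℝ)+1) * (π * i / (2*m+1)) = i * π := by field_simp
      rw [h2, Real.sin_nat_mul_pi] at h1
      have h3 := (mul_eq_zero.mp h1.symm).resolve_left hs.ne'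
      rw [Polynomial.eval_sub, h3, Polynomial.eval_mul, Polynomial.eval_prod,
        Finset.prod_eq_zero (Finset.mem_Icc.mpr ⟨hi0, by omega⟩ : i ∈ _)]
      · simp
      · simp only [Polynomial.eval_sub, Polynomial.eval_one, Polynomial.eval_mul, Polynomial.eval_C,
          Polynomial.eval_X]
        rw [inv_mul_cancel₀ (by positivity), sub_self]
  · rw [Finset.card_image_of_injOn (aux_inj m), Finset.card_range, Nat.lt_succ_iff]
    refine (Polynomial.natDegree_sub_le_of_le (n := m) (auxQ_deg m) ?_).trans (by simp)
    refine (Polynomial.natDegree_C_mul_le _ _).trans ((Polynomial.natDegree_prod_le _ _).trans ?_)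
    refine (Finset.sum_le_card_nsmul _ _ 1 ?_).trans (by simp)
    intro i _
    compute_degree

lemma aux_symm (m : ℕ) (f : ℕ → ℝ) (hf : ∀ i, 1 ≤ i → i ≤ m → f (2*m+1-i) = f i) :
    ∑ i ∈ Finset.Icc 1 (2*m), f i = 2 * ∑ i ∈ Finset.Icc 1 m, f i := by
  have h1 : Finset.Icc 1 (2*m) = Finset.Icc 1 m ∪ Finset.Icc (m+1) (2*m) := by
    ext; simp; omega
  have h2 : Disjoint (Finset.Icc 1 m) (Finset.Icc (m+1) (2*m)) := by
    rw [Finset.disjoint_left]; intro a; simp; omega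
  rw [h1, Finset.sum_union h2, two_mul (∑ i ∈ Finset.Icc 1 m, f i)]
  congr 1
  symm
  apply Finset.sum_bij' (fun i _ => 2*m+1-i) (fun i _ => 2*m+1-i)
  · intro a ha; simp at *; omega
  · intro a ha; simp at *; omega
  · intro a ha; simp at *; omega
  · intro a ha; simp at *; omega
  · intro a ha; simp at ha; exact (hf a ha.1 ha.2).symm

theorem stmt_12 (p : ℕ) (hp : p.Prime) (hodd : Odd p) (hp12 : 12 < p) :
    ((p : ℝ) ^ 6 / 2 ^ 13) * ∑ θ ∈ Finset.Icc 1 (p - 1), 1 / Real.sin (π * θ / p) ^ 12 =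
      (1 / 8192) * ((1382 / 638512875) * (p : ℝ) ^ 18 + (4 / 93555) * p ^ 16 +
        (31 / 70875) * p ^ 14 + (556 / 178605) * p ^ 12 + (3832 / 212625) * p ^ 10 +
        (256 / 2079) * p ^ 8 - (92427157 / 638512875) * p ^ 6) := by
  obtain ⟨m, rfl⟩ := hodd
  have hsum : ∑ θ ∈ Finset.Icc 1 (2*m+1-1), 1 / Real.sin (π * θ / (2*m+1 : ℕ)) ^ 12 =
      2 * ∑ i ∈ Finset.Icc 1 m, ((Real.sin (π * i / (2*m+1)) ^ 2)⁻¹) ^ 6 := by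
    rw [Nat.add_sub_cancel, aux_symm]
    · congr 1
      apply Finset.sum_congr rfl
      intro i _
      push_cast
      rw [one_div, inv_pow, ← pow_mul]
    · intro i h1 h2
      have : π * ((2*m+1-i : ℕ):ℝ) / ((2*m+1 : ℕ):ℝ) = π - π * i / ((2*m+1 : ℕ):ℝ) := by
        rw [Nat.cast_sub (by omega)]
        field_simp
      rw [this, Real.sin_pi_sub]
  rw [hsum]
  have hq : ((2*m+1 : ℕ):ℝ) ≠ 0 := by positivity
  have hN := aux_newton (Finset.Icc 1 m) (fun i => (Real.sin (π * i / (2*m+1)) ^ 2)⁻¹) _ _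
    (fun k => rfl) (fun k => rfl)
  have hc : ∀ k ≤ 6, (∏ i ∈ Finset.Icc 1 m,
    (1 - Polynomial.C ((Real.sin (π * i / (2*m+1)) ^ 2)⁻¹) * Polynomial.X) : Polynomial ℝ).coeff k
      = auxR ((2*m+1 : ℕ):ℝ) k / ((2*m+1 : ℕ):ℝ) := by
    intro k hk
    have h := auxQ_coeff m k hk
    rw [auxQ_prod, Polynomial.coeff_C_mul] at h
    rw [eq_div_iff hq]
    push_cast
    rw [← h]; ring
  obtain ⟨-, h1, h2, h3, h4, h5, h6⟩ := hN
  rw [hc 1 (by norm_num)] at *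
  rw [hc 2 (by norm_num)] at *
  rw [hc 3 (by norm_num)] at *
  rw [hc 4 (by norm_num)] at *
  rw [hc 5 (by norm_num)] at *
  rw [hc 6 (by norm_num)] at *
  generalize ((2*m+1 : ℕ):ℝ) = q at *
  generalize ∑ i ∈ Finset.Icc 1 m, ((Real.sin (π * i / (2*m+1)) ^ 2)⁻¹) ^ 1 = S1 at *
  generalize ∑ i ∈ Finset.Icc 1 m, ((Real.sin (π * i / (2*m+1)) ^ 2)⁻¹) ^ 2 = S2 at *
  generalize ∑ i ∈ Finset.Icc 1 m, ((Real.sin (π * i / (2*m+1)) ^ 2)⁻¹) ^ 3 = S3 at *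
  generalize ∑ i ∈ Finset.Icc 1 m, ((Real.sin (π * i / (2*m+1)) ^ 2)⁻¹) ^ 4 = S4 at *
  generalize ∑ i ∈ Finset.Icc 1 m, ((Real.sin (π * i / (2*m+1)) ^ 2)⁻¹) ^ 5 = S5 at *
  generalize ∑ i ∈ Finset.Icc 1 m, ((Real.sin (π * i / (2*m+1)) ^ 2)⁻¹) ^ 6 = S6 at *
  have r1 : auxR q 1 / q = -(q^2-1)/6 := by simp only [auxR]; push_cast; field_simp; ring
  have r2 : auxR q 2 / q = (q^2-1)*(q^2-9)/120 := by
    simp only [auxR]; push_cast; field_simp; ring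
  have r3 : auxR q 3 / q = -(q^2-1)*(q^2-9)*(q^2-25)/5040 := by
    simp only [auxR]; push_cast; field_simp; ring
  have r4 : auxR q 4 / q = (q^2-1)*(q^2-9)*(q^2-25)*(q^2-49)/362880 := by
    simp only [auxR]; push_cast; field_simp; ring
  have r5 : auxR q 5 / q = -(q^2-1)*(q^2-9)*(q^2-25)*(q^2-49)*(q^2-81)/39916800 := by
    simp only [auxR]; push_cast; field_simp; ring
  have r6 : auxR q 6 / q = (q^2-1)*(q^2-9)*(q^2-25)*(q^2-49)*(q^2-81)*(q^2-121)/6227020800 := by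
    simp only [auxR]; push_cast; field_simp; ring
  simp only [r1, r2, r3, r4, r5, r6] at h1 h2 h3 h4 h5 h6
  have g1 : S1 = (q^2-1)/6 := by linear_combination h1
  subst g1
  have g2 := eq_neg_of_add_eq_zero_right h2
  subst g2
  have g3 := eq_neg_of_add_eq_zero_right h3
  subst g3
  have g4 := eq_neg_of_add_eq_zero_right h4
  subst g4
  have g5 := eq_neg_of_add_eq_zero_right h5
  subst g5
  have g6 := eq_neg_of_add_eq_zero_right h6
  subst g6
  ring
end

section
/- Let p be an odd prime with p > 14. Then (p^7/2^15) · Σ_{θ=1}^{p-1} 1/sin^14(πθ/p) = (1/32768) · p^7 · ((4/18243225)p^14 + (1382/273648375)p^12 + (4/66825)p^10 + (311/637875)p^8 + (1184/382725)p^6 + (1888/111375)p^4 + (1024/9009)p^2 - 36740617/273648375). (This is the genus-8 case of the degree formula of Corollary 5.4.) -/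
open Real

theorem newton_aux {σ : Type} [Fintype σ] (x : σ → ℂ) (k : ℕ) :
    (k : ℂ) * (Finset.univ.val.map x).esymm k = (-1) ^ (k + 1) *
      ∑ a ∈ Finset.range k, (-1) ^ a * (Finset.univ.val.map x).esymm a * ∑ i, x i ^ (k - a) := by
  have h := congrArg (MvPolynomial.aeval x) (MvPolynomial.mul_esymm_eq_sum σ ℂ k)
  simp only [map_mul, map_natCast, map_pow, map_neg, map_one, map_sum,
    MvPolynomial.aeval_esymm_eq_multiset_esymm, MvPolynomial.psum, MvPolynomial.aeval_X] at h
  rw [h, Finset.sum_filter, Finset.Nat.sum_antidiagonal_eq_sum_range_succ_mk,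
    Finset.sum_range_succ]
  simp only [lt_irrefl, if_false, add_zero]
  congr 1
  apply Finset.sum_congr rfl
  intro a ha
  rw [if_pos (Finset.mem_range.mp ha)]

theorem esymm_aux {σ : Type} [Fintype σ] (x : σ → ℂ) (hx : Function.Injective x) (p : ℕ)
    (hp : 1 ≤ p) (hc : Fintype.card σ = p - 1) (hr : ∀ i, (x i + 1) ^ p = (x i - 1) ^ p) (j : ℕ)
    (hj : j ≤ p - 1) :
    2 * (p : ℂ) * ((-1) ^ j * (Finset.univ.val.map x).esymm j) =
      (1 - (-1) ^ (j + 1)) * (p.choose (j + 1) : ℂ) := by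
  classical
  have hp0 : (p : ℂ) ≠ 0 := by exact_mod_cast (by omega : p ≠ 0)
  set Q : Polynomial ℂ := (Polynomial.X + Polynomial.C 1) ^ p -
    (Polynomial.X + Polynomial.C (-1)) ^ p with hQ
  have hcoef : ∀ k, k ≤ p → Q.coeff k = (1 - (-1) ^ (p - k)) * (p.choose k : ℂ) := by
    intro k _
    rw [hQ, Polynomial.coeff_sub, Polynomial.coeff_X_add_C_pow, Polynomial.coeff_X_add_C_pow]
    ring
  have hdeg : Q.natDegree ≤ p - 1 := by
    rw [Polynomial.natDegree_le_iff_coeff_eq_zero]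
    intro N hN
    rcases Nat.lt_or_ge p N with h | h
    · rw [hQ, Polynomial.coeff_sub, Polynomial.coeff_X_add_C_pow, Polynomial.coeff_X_add_C_pow,
        Nat.choose_eq_zero_of_lt h]
      simp
    · rw [hcoef N h]
      have : p - N = 0 := by omega
      simp [this]
  have hlead : Q.coeff (p - 1) = 2 * p := by
    rw [hcoef _ (by omega)]
    have : p - (p - 1) = 1 := by omega
    rw [this, Nat.choose_symm (by omega : 1 ≤ p)]
    simp; norm_num
  have hmon : (∏ i, (Polynomial.X - Polynomial.C (x i))).Monic :=
    Polynomial.monic_prod_of_monic _ _ fun i _ => Polynomial.monic_X_sub_C _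
  have hdvd : (∏ i, (Polynomial.X - Polynomial.C (x i))) ∣ Q := by
    apply Finset.prod_dvd_of_coprime
    · intro i _ j _ hij
      exact Polynomial.pairwise_coprime_X_sub_C hx hij
    · intro i _
      rw [Polynomial.dvd_iff_isRoot, Polynomial.IsRoot.def, hQ]
      simp [hr i, ← sub_eq_add_neg]
  have hdegP : (∏ i, (Polynomial.X - Polynomial.C (x i))).natDegree = p - 1 := by
    rw [Polynomial.natDegree_prod_of_monic _ _ fun i _ => Polynomial.monic_X_sub_C _]
    simp [hc]
  have hfac := Polynomial.eq_leadingCoeff_mul_of_monic_of_dvd_of_natDegree_le hmon hdvd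
    (by rw [hdegP]; exact hdeg)
  have hnd : Q.natDegree = p - 1 := le_antisymm hdeg
    (Polynomial.le_natDegree_of_ne_zero (by rw [hlead]; simp [hp0]))
  have hlc : Q.leadingCoeff = 2 * p := by rw [Polynomial.leadingCoeff, hnd, hlead]
  have hv := Multiset.prod_X_sub_C_coeff (Finset.univ.val.map x) (k := p - 1 - j)
    (by simp [hc])
  have hcard : Multiset.card (Finset.univ.val.map x) = p - 1 := by
    rw [Multiset.card_map]; exact hc
  rw [hcard, Multiset.map_map] at hv
  have e1 : p - 1 - (p - 1 - j) = j := by omega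
  rw [e1] at hv
  have h2 := congrArg (fun q => Polynomial.coeff q (p - 1 - j)) hfac
  simp only [Polynomial.coeff_C_mul] at h2
  rw [hlc, hcoef _ (by omega)] at h2
  have e2 : p - (p - 1 - j) = j + 1 := by omega
  have e3 : p.choose (p - 1 - j) = p.choose (j + 1) := by
    rw [← Nat.choose_symm (by omega : j + 1 ≤ p)]; congr 1; omega
  rw [e2, e3] at h2
  rw [h2, ← hv]
  rfl

theorem choose_aux (p n : ℕ) (hn : n ≤ p) :
    (p.choose n : ℂ) * (n.factorial : ℂ) = ∏ i ∈ Finset.range n, ((p : ℂ) - i) := by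
  have h := Nat.descFactorial_eq_factorial_mul_choose p n
  rw [Nat.descFactorial_eq_prod_range] at h
  have h2 := congrArg (Nat.cast (R := ℂ)) h
  push_cast at h2
  rw [mul_comm, ← h2]
  apply Finset.prod_congr rfl
  intro i hi
  rw [Nat.cast_sub (by have := Finset.mem_range.mp hi; omega)]

set_option maxHeartbeats 4000000 in
theorem psum_aux (p : ℂ) (e S : ℕ → ℂ) (h0 : e 0 = 1)
    (hodd : ∀ j, j ≤ 6 → e (2 * j + 1) = 0)
    (heven : ∀ j, j ≤ 7 → e (2 * j) * ((2 * j + 1).factorial : ℂ) =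
      ∏ i ∈ Finset.range (2 * j), (p - (i + 1 : ℕ)))
    (hN : ∀ k : ℕ, (k : ℂ) * e k = (-1) ^ (k + 1) *
      ∑ a ∈ Finset.range k, (-1) ^ a * e a * S (k - a)) :
    (p - 1) - 7 * S 2 + 21 * S 4 - 35 * S 6 + 35 * S 8 - 21 * S 10 + 7 * S 12 - S 14 =
      ((4 / 18243225) * p ^ 14 +
        (1382 / 273648375) * p ^ 12 + (4 / 66825) * p ^ 10 + (311 / 637875) * p ^ 8 +
        (1184 / 382725) * p ^ 6 + (1888 / 111375) * p ^ 4 + (1024 / 9009) * p ^ 2 -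
        36740617 / 273648375) := by
  have o1 := hodd 0 (by norm_num)
  have o3 := hodd 1 (by norm_num)
  have o5 := hodd 2 (by norm_num)
  have o7 := hodd 3 (by norm_num)
  have o9 := hodd 4 (by norm_num)
  have o11 := hodd 5 (by norm_num)
  have o13 := hodd 6 (by norm_num)
  have v2 := heven 1 (by norm_num)
  have v4 := heven 2 (by norm_num)
  have v6 := heven 3 (by norm_num)
  have v8 := heven 4 (by norm_num)
  have v10 := heven 5 (by norm_num)
  have v12 := heven 6 (by norm_num)
  have v14 := heven 7 (by norm_num)
  have n2 := hN 2
  have n4 := hN 4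
  have n6 := hN 6
  have n8 := hN 8
  have n10 := hN 10
  have n12 := hN 12
  have n14 := hN 14
  norm_num at o1 o3 o5 o7 o9 o11 o13
  norm_num [Finset.prod_range_succ, Nat.factorial] at v2 v4 v6 v8 v10 v12 v14
  norm_num [Finset.sum_range_succ, h0, o1, o3, o5, o7, o9, o11, o13] at n2 n4 n6 n8 n10 n12 n14
  clear hN hodd heven
  rw [← eq_div_iff (by norm_num)] at v2 v4 v6 v8 v10 v12 v14
  have s2 : S 2 = (-2/3) * p ^ 0 + (1) * p ^ 1 + (-1/3) * p ^ 2 := by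
    rw [v2] at n2
    linear_combination n2
  have s4 : S 4 = (-26/45) * p ^ 0 + (1) * p ^ 1 + (-4/9) * p ^ 2 + (1/45) * p ^ 4 := by
    rw [v2, v4, s2] at n4
    linear_combination n4
  have s6 : S 6 = (-502/945) * p ^ 0 + (1) * p ^ 1 + (-23/45) * p ^ 2 + (2/45) * p ^ 4 + (-2/945) * p ^ 6 := by
    rw [v2, v4, v6, s2, s4] at n6
    linear_combination n6
  have s8 : S 8 = (-7102/14175) * p ^ 0 + (1) * p ^ 1 + (-176/315) * p ^ 2 + (44/675) * p ^ 4 + (-16/2835) * p ^ 6 + (1/4725) * p ^ 8 := by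
    rw [v2, v4, v6, v8, s2, s4, s6] at n8
    linear_combination n8
  have s10 : S 10 = (-44834/93555) * p ^ 0 + (1) * p ^ 1 + (-563/945) * p ^ 2 + (718/8505) * p ^ 4 + (-86/8505) * p ^ 6 + (2/2835) * p ^ 8 + (-2/93555) * p ^ 10 := by
    rw [v2, v4, v6, v8, v10, s2, s4, s6, s8] at n10
    linear_combination n10
  have s12 : S 12 = (-295272982/638512875) * p ^ 0 + (1) * p ^ 1 + (-6508/10395) * p ^ 2 + (21757/212625) * p ^ 4 + (-544/35721) * p ^ 6 + (106/70875) * p ^ 8 + (-8/93555) * p ^ 10 + (1382/638512875) * p ^ 12 := by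
    rw [v2, v4, v6, v8, v10, v12, s2, s4, s6, s8, s10] at n12
    linear_combination n12
  have s14 : S 14 = (-122850554/273648375) * p ^ 0 + (1) * p ^ 1 + (-88069/135135) * p ^ 2 + (39788/334125) * p ^ 4 + (-7964/382725) * p ^ 6 + (1642/637875) * p ^ 8 + (-14/66825) * p ^ 10 + (2764/273648375) * p ^ 12 + (-4/18243225) * p ^ 14 := by
    rw [v2, v4, v6, v8, v10, v12, v14, s2, s4, s6, s8, s10, s12] at n14
    linear_combination n14
  rw [s2, s4, s6, s8, s10, s12, s14]
  ring

theorem root_aux (p t : ℕ) (hp : 0 < p) (hs : Real.sin (π * t / p) ≠ 0) :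
    (Complex.I * (Real.cos (π * t / p) / Real.sin (π * t / p) : ℝ) + 1) ^ p =
    (Complex.I * (Real.cos (π * t / p) / Real.sin (π * t / p) : ℝ) - 1) ^ p := by
  set a : ℝ := π * t / p with ha
  have hpa : (p : ℝ) * a = t * π := by
    rw [ha]; field_simp
  have hs' : (Real.sin a : ℂ) ≠ 0 := by exact_mod_cast hs
  have h1 : (Complex.I * (Real.cos a / Real.sin a : ℝ) + 1 : ℂ) =
      Complex.I / Real.sin a * (Complex.cos (-a : ℝ) + Complex.sin (-a : ℝ) * Complex.I) := by
    rw [← Complex.ofReal_cos, ← Complex.ofReal_sin, Real.cos_neg, Real.sin_neg]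
    push_cast at hs' ⊢
    field_simp
    linear_combination (Complex.sin a) * Complex.I_sq
  have h2 : (Complex.I * (Real.cos a / Real.sin a : ℝ) - 1 : ℂ) =
      Complex.I / Real.sin a * (Complex.cos (a : ℝ) + Complex.sin (a : ℝ) * Complex.I) := by
    push_cast at hs' ⊢
    field_simp
    linear_combination (-Complex.sin a) * Complex.I_sq
  rw [h1, h2, mul_pow, mul_pow, Complex.cos_add_sin_mul_I_pow, Complex.cos_add_sin_mul_I_pow]
  congr 1
  have e1 : (p : ℂ) * (a : ℝ) = ((t * π : ℝ) : ℂ) := by rw [← hpa]; push_cast; ring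
  have e2 : (p : ℂ) * ((-a : ℝ) : ℂ) = ((-(t * π) : ℝ) : ℂ) := by rw [← hpa]; push_cast; ring
  rw [e1, e2, ← Complex.ofReal_cos, ← Complex.ofReal_sin, ← Complex.ofReal_cos,
    ← Complex.ofReal_sin, Real.cos_neg, Real.sin_neg, Real.sin_nat_mul_pi]
  simp

theorem stmt_13 (p : ℕ) (hp : p.Prime) (hodd : Odd p) (hp14 : 14 < p) :
    ((p : ℝ) ^ 7 / 2 ^ 15) * ∑ θ ∈ Finset.Icc 1 (p - 1), 1 / Real.sin (π * θ / p) ^ 14 =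
      (1 / 32768) * (p : ℝ) ^ 7 * ((4 / 18243225) * (p : ℝ) ^ 14 +
        (1382 / 273648375) * p ^ 12 + (4 / 66825) * p ^ 10 + (311 / 637875) * p ^ 8 +
        (1184 / 382725) * p ^ 6 + (1888 / 111375) * p ^ 4 + (1024 / 9009) * p ^ 2 -
        36740617 / 273648375) := by
  have hp0 : (p : ℂ) ≠ 0 := by exact_mod_cast (by omega : p ≠ 0)
  have hpR : (0 : ℝ) < p := by exact_mod_cast (by omega : 0 < p)
  let x : (Finset.Icc 1 (p - 1)) → ℂ := fun t =>
    Complex.I * (Real.cos (π * (t : ℕ) / p) / Real.sin (π * (t : ℕ) / p) : ℝ)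
  have hbd : ∀ t : Finset.Icc 1 (p - 1), 0 < π * (t : ℕ) / p ∧ π * (t : ℕ) / p < π := by
    intro t
    have ht := Finset.mem_Icc.mp t.2
    have h1 : (0 : ℝ) < (t : ℕ) := by exact_mod_cast (by omega : 0 < (t : ℕ))
    have h2 : ((t : ℕ) : ℝ) < p := by exact_mod_cast (by omega : (t : ℕ) < p)
    refine ⟨by positivity, ?_⟩
    rw [div_lt_iff₀ hpR]
    exact mul_lt_mul_of_pos_left h2 Real.pi_pos
  have hs : ∀ t : Finset.Icc 1 (p - 1), Real.sin (π * (t : ℕ) / p) ≠ 0 := fun t =>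
    (Real.sin_pos_of_pos_of_lt_pi (hbd t).1 (hbd t).2).ne'
  have hinj : Function.Injective x := by
    intro a b hab
    have h1 := mul_left_cancel₀ Complex.I_ne_zero hab
    have h2 := Complex.ofReal_injective h1
    rw [div_eq_div_iff (hs a) (hs b)] at h2
    have h3 : Real.sin (π * (a : ℕ) / p - π * (b : ℕ) / p) = 0 := by
      rw [Real.sin_sub]; linarith
    rw [Real.sin_eq_zero_iff_of_lt_of_lt (by linarith [(hbd a).1, (hbd b).2])
      (by linarith [(hbd b).1, (hbd a).2])] at h3
    have h4 : π * ((a : ℕ) : ℝ) = π * ((b : ℕ) : ℝ) := by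
      have := sub_eq_zero.mp h3
      field_simp at this
      rw [this]
    have h5 := mul_left_cancel₀ Real.pi_ne_zero h4
    exact Subtype.ext (by exact_mod_cast h5)
  have hE := esymm_aux x hinj p (by omega) (by simp)
    (fun i => root_aux p i (by omega) (hs i))
  have key := psum_aux (p : ℂ) (fun k => (Finset.univ.val.map x).esymm k)
    (fun k => ∑ i, x i ^ k) (by simp [Multiset.esymm]) ?_ ?_ (fun k => newton_aux x k)
  · have hsum : ((∑ θ ∈ Finset.Icc 1 (p - 1), 1 / Real.sin (π * θ / p) ^ 14 : ℝ) : ℂ) =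
        ∑ i, (1 - 7 * x i ^ 2 + 21 * x i ^ 4 - 35 * x i ^ 6 + 35 * x i ^ 8 - 21 * x i ^ 10
          + 7 * x i ^ 12 - x i ^ 14) := by
      rw [← Finset.sum_coe_sort, Complex.ofReal_sum]
      apply Finset.sum_congr rfl
      intro i _
      have e1 : (1 / Real.sin (π * (i : ℕ) / p) ^ 14 : ℝ) =
          (1 + (Real.cos (π * (i : ℕ) / p) / Real.sin (π * (i : ℕ) / p)) ^ 2) ^ 7 := by
        have := hs i
        have h : 1 + (Real.cos (π * (i : ℕ) / p) / Real.sin (π * (i : ℕ) / p)) ^ 2 =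
            1 / Real.sin (π * (i : ℕ) / p) ^ 2 := by
          rw [div_pow, eq_div_iff (pow_ne_zero 2 this), add_mul, div_mul_cancel₀ _ (pow_ne_zero 2 this)]
          linarith [Real.sin_sq_add_cos_sq (π * (i : ℕ) / p)]
        rw [h, div_pow, ← pow_mul]; norm_num
      rw [e1]
      have e2 : x i ^ 2 = -((Real.cos (π * (i : ℕ) / p) / Real.sin (π * (i : ℕ) / p) : ℝ) : ℂ) ^ 2 := by
        simp only [x]
        rw [mul_pow, Complex.I_sq]; ring
      have e3 : (1 - 7 * x i ^ 2 + 21 * x i ^ 4 - 35 * x i ^ 6 + 35 * x i ^ 8 - 21 * x i ^ 10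
          + 7 * x i ^ 12 - x i ^ 14) = (1 - x i ^ 2) ^ 7 := by ring
      rw [e3, e2, Complex.ofReal_pow, Complex.ofReal_add, Complex.ofReal_pow, Complex.ofReal_one]
      ring
    simp only [Finset.sum_add_distrib, Finset.sum_sub_distrib, ← Finset.mul_sum] at hsum
    have hc : (∑ i : Finset.Icc 1 (p - 1), (1 : ℂ)) = (p : ℂ) - 1 := by
      simp [Nat.cast_sub (by omega : 1 ≤ p)]
    rw [hc] at hsum
    have hfin := hsum.trans key
    have hR : (∑ θ ∈ Finset.Icc 1 (p - 1), 1 / Real.sin (π * θ / p) ^ 14 : ℝ) =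
      ((4 / 18243225) * (p : ℝ) ^ 14 +
        (1382 / 273648375) * p ^ 12 + (4 / 66825) * p ^ 10 + (311 / 637875) * p ^ 8 +
        (1184 / 382725) * p ^ 6 + (1888 / 111375) * p ^ 4 + (1024 / 9009) * p ^ 2 -
        36740617 / 273648375) := by
      apply Complex.ofReal_injective
      rw [hfin]
      push_cast
      ring
    rw [hR]
    ring
  · intro j hj
    have h := hE (2 * j + 1) (by omega)
    have e : (-1 : ℂ) ^ (2 * j + 1) = -1 := by rw [pow_succ, pow_mul]; simp
    have e' : (-1 : ℂ) ^ (2 * j + 1 + 1) = 1 := by rw [pow_succ, e]; simp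
    rw [e, e'] at h
    simpa [hp0] using h
  · intro j hj
    have h := hE (2 * j) (by omega)
    have e : (-1 : ℂ) ^ (2 * j) = 1 := by rw [pow_mul]; simp
    have e' : (-1 : ℂ) ^ (2 * j + 1) = -1 := by rw [pow_succ, e]; simp
    rw [e, e'] at h
    have h2 := choose_aux p (2 * j + 1) (by omega)
    rw [Finset.prod_range_succ'] at h2
    have h3 : (p : ℂ) * ((Finset.univ.val.map x).esymm (2 * j)) = (p.choose (2 * j + 1) : ℂ) := by
      linear_combination h / 2
    apply mul_left_cancel₀ hp0
    rw [← mul_assoc, h3, h2]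
    simp [mul_comm]
end

section
/- Let p be an odd prime with p > 16. Then (p^8/2^17) · Σ_{θ=1}^{p-1} 1/sin^16(πθ/p) = (1/131072) · p^8 · ((3617/162820783125)p^16 + (32/54729675)p^14 + (226648/28733079375)p^12 + (2144/29469825)p^10 + (4946/9568125)p^8 + (268864/88409475)p^6 + (17067584/1064188125)p^4 + (2048/19305)p^2 - 61430943169/488462349375). (This is the genus-9 case of the degree formula of Corollary 5.4.) -/
open Real

namespace S14

open Polynomial in
lemma ps (ι : Type) [DecidableEq ι] (s : Finset ι) (y : ι → ℝ) :
    PowerSeries.derivative ℝ (∏ k ∈ s, (1 - PowerSeries.C (y k) * PowerSeries.X)) =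
      - (∏ k ∈ s, (1 - PowerSeries.C (y k) * PowerSeries.X)) *
        PowerSeries.mk (fun n => ∑ k ∈ s, y k ^ (n+1)) := by
  induction s using Finset.induction_on with
  | empty =>
    have : PowerSeries.mk (fun n => ∑ k ∈ (∅ : Finset ι), y k ^ (n+1)) = 0 := by
      ext n; simp
    rw [this]; simp
  | insert a s ha ih =>
    have h1 : PowerSeries.mk (fun n => ∑ k ∈ insert a s, y k ^ (n+1)) =
        PowerSeries.mk (fun n => y a ^ (n+1)) + PowerSeries.mk (fun n => ∑ k ∈ s, y k ^ (n+1)) := by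
      ext n; simp [Finset.sum_insert ha]
    have h2 : (1 - PowerSeries.C (y a) * PowerSeries.X) * PowerSeries.mk (fun n => y a ^ (n+1))
        = PowerSeries.C (y a) := by
      ext n
      rw [sub_mul, one_mul, mul_assoc, map_sub, PowerSeries.coeff_C_mul]
      cases n with
      | zero => simp
      | succ n => 
        rw [PowerSeries.coeff_succ_X_mul]
        simp; ring
    have h3 : PowerSeries.derivative ℝ (1 - PowerSeries.C (y a) * PowerSeries.X)
        = - PowerSeries.C (y a) := by
      rw [map_sub, Derivation.leibniz]
      simp [PowerSeries.derivative_C, PowerSeries.derivative_X]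
    rw [Finset.prod_insert ha, Derivation.leibniz, ih, h1, h3]
    simp only [smul_eq_mul]
    linear_combination (∏ k ∈ s, (1 - PowerSeries.C (y k) * PowerSeries.X)) * h2

lemma newton (ι : Type) [DecidableEq ι] (s : Finset ι) (y : ι → ℝ) (n : ℕ) :
    (∏ k ∈ s, (1 - Polynomial.C (y k) * Polynomial.X)).coeff (n+1) * (n+1) =
    - ∑ i ∈ Finset.range (n+1), (∏ k ∈ s, (1 - Polynomial.C (y k) * Polynomial.X)).coeff i *
       ∑ k ∈ s, y k ^ (n - i + 1) := by
  have h := congrArg (PowerSeries.coeff n) (ps ι s y)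
  have hc : (∏ k ∈ s, (1 - PowerSeries.C (y k) * PowerSeries.X)) =
     ((∏ k ∈ s, (1 - Polynomial.C (y k) * Polynomial.X) : Polynomial ℝ) : PowerSeries ℝ) := by
    rw [← Polynomial.coeToPowerSeries.ringHom_apply, map_prod]
    simp
  rw [hc, PowerSeries.coeff_derivative, neg_mul, map_neg, PowerSeries.coeff_mul,
    Finset.Nat.sum_antidiagonal_eq_sum_range_succ_mk] at h
  simpa using h

noncomputable def G : ℕ → Polynomial ℝ
  | 0 => 1
  | 1 => 3 - 4 * Polynomial.X
  | (m+2) => (2 - 4 * Polynomial.X) * G (m+1) - G m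

lemma G_sin (x : ℝ) (m : ℕ) : sin ((2*m+1) * x) = sin x * (G m).eval (sin x ^ 2) := by
  induction m using Nat.twoStepInduction with
  | zero => simp [G]
  | one =>
    have : (2 * ((1:ℕ):ℝ) + 1) * x = 3 * x := by push_cast; ring
    rw [this, sin_three_mul]; simp [G]; ring
  | more m h1 h2 =>
    have e1 : (2 * ((m+2:ℕ):ℝ) + 1) * x = (2 * ((m+1:ℕ):ℝ) + 1) * x + 2 * x := by push_cast; ring
    have e2 : (2 * (m:ℝ) + 1) * x = (2 * ((m+1:ℕ):ℝ) + 1) * x - 2 * x := by push_cast; ring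
    rw [e2, sin_sub, h2] at h1
    rw [e1, sin_add, h2]
    have hc : cos (2*x) = 1 - 2 * sin x ^ 2 := by rw [cos_two_mul, cos_sq']; ring
    rw [hc] at h1 ⊢
    simp only [G, Polynomial.eval_sub, Polynomial.eval_mul, Polynomial.eval_ofNat, Polynomial.eval_X]
    linear_combination -h1

lemma G_deg (m : ℕ) : (G m).natDegree ≤ m := by
  induction m using Nat.twoStepInduction with
  | zero => simp [G]
  | one => 
    have : G 1 = 3 - 4 * Polynomial.X := by simp [G]
    rw [this]; compute_degree
  | more m h1 h2 =>
    rw [G]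
    refine (Polynomial.natDegree_sub_le _ _).trans (max_le ?_ (by omega))
    refine Polynomial.natDegree_mul_le.trans ?_
    have : (2 - 4 * Polynomial.X : Polynomial ℝ).natDegree ≤ 1 := by compute_degree
    omega

lemma G_rec0 (m : ℕ) : (G (m+2)).coeff 0 = 2 * (G (m+1)).coeff 0 - (G m).coeff 0 := by
  rw [G]; simp [Polynomial.mul_coeff_zero]

lemma G_rec (m j : ℕ) : (G (m+2)).coeff (j+1) =
    2 * (G (m+1)).coeff (j+1) - 4 * (G (m+1)).coeff j - (G m).coeff (j+1) := by
  have : G (m+2) = Polynomial.C 2 * G (m+1) - Polynomial.C 4 * (Polynomial.X * G (m+1)) - G m := by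
    rw [G]; simp only [map_ofNat]; ring
  rw [this]; simp only [Polynomial.coeff_sub, Polynomial.coeff_C_mul, Polynomial.coeff_X_mul]

lemma G1 (j : ℕ) : (G 1).coeff (j+2) = 0 :=
  Polynomial.coeff_eq_zero_of_natDegree_lt ((G_deg 1).trans_lt (by omega))
lemma G0 (j : ℕ) : (G 0).coeff (j+1) = 0 :=
  Polynomial.coeff_eq_zero_of_natDegree_lt ((G_deg 0).trans_lt (by omega))
lemma G11 : (G 1).coeff 1 = -4 := by
  have : G 1 = Polynomial.C 3 - Polynomial.C 4 * Polynomial.X := by simp only [G, map_ofNat]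
  rw [this]; simp [Polynomial.coeff_C]
lemma G10 : (G 1).coeff 0 = 3 := by
  have : G 1 = Polynomial.C 3 - Polynomial.C 4 * Polynomial.X := by simp only [G, map_ofNat]
  rw [this]; simp

lemma c0 (m : ℕ) (N : ℝ) (hN : N = 2 * m + 1) : (G m).coeff 0 = N * 1 := by
  subst hN
  induction m using Nat.twoStepInduction with
  | zero => simp [G]
  | one => rw [G10]; norm_num
  | more m h1 h2 => rw [G_rec0, h1, h2]; push_cast; ring

lemma c1 (m : ℕ) (N : ℝ) (hN : N = 2 * m + 1) : (G m).coeff 1 = N * (-(1*(N^2-1)/6)) := by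
  subst hN
  induction m using Nat.twoStepInduction with
  | zero => rw [G0 0]; norm_num
  | one => rw [G11]; norm_num
  | more m h1 h2 => rw [G_rec m 0, h1, h2, c0 (m+1) _ rfl]; push_cast; ring

lemma c2 (m : ℕ) (N : ℝ) (hN : N = 2 * m + 1) : (G m).coeff 2 = N * ((1*(N^2-1)*(N^2-9)/120)) := by
  subst hN
  induction m using Nat.twoStepInduction with
  | zero => rw [G0 1]; norm_num
  | one => rw [G1 0]; norm_num
  | more m h1 h2 => rw [G_rec m 1, h1, h2, c1 (m+1) _ rfl]; push_cast; ring

lemma c3 (m : ℕ) (N : ℝ) (hN : N = 2 * m + 1) : (G m).coeff 3 = N * (-(1*(N^2-1)*(N^2-9)*(N^2-25)/5040)) := by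
  subst hN
  induction m using Nat.twoStepInduction with
  | zero => rw [G0 2]; norm_num
  | one => rw [G1 1]; norm_num
  | more m h1 h2 => rw [G_rec m 2, h1, h2, c2 (m+1) _ rfl]; push_cast; ring

lemma c4 (m : ℕ) (N : ℝ) (hN : N = 2 * m + 1) : (G m).coeff 4 = N * ((1*(N^2-1)*(N^2-9)*(N^2-25)*(N^2-49)/362880)) := by
  subst hN
  induction m using Nat.twoStepInduction with
  | zero => rw [G0 3]; norm_num
  | one => rw [G1 2]; norm_num
  | more m h1 h2 => rw [G_rec m 3, h1, h2, c3 (m+1) _ rfl]; push_cast; ring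

lemma c5 (m : ℕ) (N : ℝ) (hN : N = 2 * m + 1) : (G m).coeff 5 = N * (-(1*(N^2-1)*(N^2-9)*(N^2-25)*(N^2-49)*(N^2-81)/39916800)) := by
  subst hN
  induction m using Nat.twoStepInduction with
  | zero => rw [G0 4]; norm_num
  | one => rw [G1 3]; norm_num
  | more m h1 h2 => rw [G_rec m 4, h1, h2, c4 (m+1) _ rfl]; push_cast; ring

lemma c6 (m : ℕ) (N : ℝ) (hN : N = 2 * m + 1) : (G m).coeff 6 = N * ((1*(N^2-1)*(N^2-9)*(N^2-25)*(N^2-49)*(N^2-81)*(N^2-121)/6227020800)) := by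
  subst hN
  induction m using Nat.twoStepInduction with
  | zero => rw [G0 5]; norm_num
  | one => rw [G1 4]; norm_num
  | more m h1 h2 => rw [G_rec m 5, h1, h2, c5 (m+1) _ rfl]; push_cast; ring

lemma c7 (m : ℕ) (N : ℝ) (hN : N = 2 * m + 1) : (G m).coeff 7 = N * (-(1*(N^2-1)*(N^2-9)*(N^2-25)*(N^2-49)*(N^2-81)*(N^2-121)*(N^2-169)/1307674368000)) := by
  subst hN
  induction m using Nat.twoStepInduction with
  | zero => rw [G0 6]; norm_num
  | one => rw [G1 5]; norm_num
  | more m h1 h2 => rw [G_rec m 6, h1, h2, c6 (m+1) _ rfl]; push_cast; ring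

lemma c8 (m : ℕ) (N : ℝ) (hN : N = 2 * m + 1) : (G m).coeff 8 = N * ((1*(N^2-1)*(N^2-9)*(N^2-25)*(N^2-49)*(N^2-81)*(N^2-121)*(N^2-169)*(N^2-225)/355687428096000)) := by
  subst hN
  induction m using Nat.twoStepInduction with
  | zero => rw [G0 7]; norm_num
  | one => rw [G1 6]; norm_num
  | more m h1 h2 => rw [G_rec m 7, h1, h2, c7 (m+1) _ rfl]; push_cast; ring

lemma ang (m k : ℕ) (hk : k ∈ Finset.Icc 1 m) :
    0 < π * k / (2*m+1) ∧ π * k / (2*m+1) < π / 2 := by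
  rw [Finset.mem_Icc] at hk
  have h1 : (1:ℝ) ≤ k := by exact_mod_cast hk.1
  have h2 : (k:ℝ) ≤ m := by exact_mod_cast hk.2
  have := pi_pos
  constructor
  · positivity
  · rw [div_lt_div_iff₀ (by positivity) (by norm_num)]
    nlinarith

lemma G_prod (m : ℕ) : G m = Polynomial.C (2*m+1 : ℝ) *
    ∏ k ∈ Finset.Icc 1 m, (1 - Polynomial.C ((1 / sin (π * k / (2*m+1)) ^ 2)) * Polynomial.X) := by
  have hinj : Set.InjOn (fun k : ℕ => sin (π * k / (2*m+1)) ^ 2) (Finset.Icc 1 m) := by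
    intro a ha b hb hab
    have ha' := ang m a ha
    have hb' := ang m b hb
    have hpa := sin_pos_of_pos_of_lt_pi ha'.1 (by linarith [pi_pos])
    have hpb := sin_pos_of_pos_of_lt_pi hb'.1 (by linarith [pi_pos])
    have h1 := (pow_left_inj₀ hpa.le hpb.le two_ne_zero).1 hab
    have h2 := injOn_sin ⟨by linarith [pi_pos], ha'.2.le⟩ ⟨by linarith [pi_pos], hb'.2.le⟩ h1
    have := pi_pos
    field_simp at h2
    exact_mod_cast h2
  set S : Finset ℝ := insert 0 ((Finset.Icc 1 m).image (fun k : ℕ => sin (π * k / (2*m+1)) ^ 2)) with hS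
  have hcard : S.card = m + 1 := by
    rw [hS, Finset.card_insert_of_notMem, Finset.card_image_of_injOn hinj]
    · simp
    · intro h
      obtain ⟨k, hk, h⟩ := Finset.mem_image.1 h
      have ha' := ang m k hk
      have hpa := sin_pos_of_pos_of_lt_pi ha'.1 (by linarith [pi_pos])
      have : 0 < sin (π * k / (2*m+1)) ^ 2 := by positivity
      exact this.ne' h
  refine Polynomial.eq_of_degrees_lt_of_eval_finset_eq S ?_ ?_ ?_
  · rw [hcard]
    exact (Polynomial.degree_le_of_natDegree_le (G_deg m)).trans_lt (by exact_mod_cast Nat.lt_succ_self m)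
  · rw [hcard]
    refine lt_of_le_of_lt (Polynomial.degree_le_of_natDegree_le (n := m) ?_) (by exact_mod_cast Nat.lt_succ_self m)
    refine (Polynomial.natDegree_C_mul_le _ _).trans ?_
    refine (Polynomial.natDegree_prod_le _ _).trans ?_
    refine (Finset.sum_le_card_nsmul _ _ 1 ?_).trans (by simp)
    intro k _
    compute_degree
  · intro t ht
    rw [hS, Finset.mem_insert] at ht
    rcases ht with rfl | ht
    · rw [← Polynomial.coeff_zero_eq_eval_zero, c0 m _ rfl]
      simp [Polynomial.eval_prod]
    · obtain ⟨k, hk, rfl⟩ := Finset.mem_image.1 ht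
      have ha' := ang m k hk
      have hpa := sin_pos_of_pos_of_lt_pi ha'.1 (by linarith [pi_pos])
      have h := G_sin (π * k / (2*m+1)) m
      have e : (2 * (m:ℝ) + 1) * (π * k / (2*m+1)) = k * π := by
        have : (2 * (m:ℝ) + 1) ≠ 0 := by positivity
        field_simp
      rw [e, sin_nat_mul_pi] at h
      have h0 : Polynomial.eval (sin (π * k / (2*m+1)) ^ 2) (G m) = 0 := by
        rcases mul_eq_zero.1 h.symm with h | h
        · exact absurd h hpa.ne'
        · exact h
      rw [h0, Polynomial.eval_mul, Polynomial.eval_prod, Finset.prod_eq_zero hk, mul_zero]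
      simp [hpa.ne']

lemma half (m : ℕ) (f : ℕ → ℝ) (hf : ∀ k ∈ Finset.Icc 1 m, f (2*m+1-k) = f k) :
    ∑ k ∈ Finset.Icc 1 (2*m), f k = 2 * ∑ k ∈ Finset.Icc 1 m, f k := by
  have hu : Finset.Icc 1 (2*m) = Finset.Icc 1 m ∪ Finset.Icc (m+1) (2*m) := by
    ext x; simp only [Finset.mem_union, Finset.mem_Icc]; omega
  rw [hu, Finset.sum_union]
  · suffices h : ∑ k ∈ Finset.Icc (m+1) (2*m), f k = ∑ k ∈ Finset.Icc 1 m, f k by rw [h]; ring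
    refine Finset.sum_bij' (fun (k:ℕ) _ => 2*m+1-k) (fun (k:ℕ) _ => 2*m+1-k) ?_ ?_ ?_ ?_ ?_
    · intro a; simp only [Finset.mem_Icc]; omega
    · intro a; simp only [Finset.mem_Icc]; omega
    · intro a; simp only [Finset.mem_Icc]; omega
    · intro a; simp only [Finset.mem_Icc]; omega
    · intro a ha
      simp only [Finset.mem_Icc] at ha
      rw [← hf (2*m+1-a) (by simp only [Finset.mem_Icc]; omega)]
      congr 1; omega
  · rw [Finset.disjoint_left]; intro x; simp only [Finset.mem_Icc]; omega

lemma alg (N : ℝ) (c p : ℕ → ℝ) (h0 : c 0 = 1)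
    (h1 : c 1 = -(1*(N^2-1)/6))
    (h2 : c 2 = (1*(N^2-1)*(N^2-9)/120))
    (h3 : c 3 = -(1*(N^2-1)*(N^2-9)*(N^2-25)/5040))
    (h4 : c 4 = (1*(N^2-1)*(N^2-9)*(N^2-25)*(N^2-49)/362880))
    (h5 : c 5 = -(1*(N^2-1)*(N^2-9)*(N^2-25)*(N^2-49)*(N^2-81)/39916800))
    (h6 : c 6 = (1*(N^2-1)*(N^2-9)*(N^2-25)*(N^2-49)*(N^2-81)*(N^2-121)/6227020800))
    (h7 : c 7 = -(1*(N^2-1)*(N^2-9)*(N^2-25)*(N^2-49)*(N^2-81)*(N^2-121)*(N^2-169)/1307674368000))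
    (h8 : c 8 = (1*(N^2-1)*(N^2-9)*(N^2-25)*(N^2-49)*(N^2-81)*(N^2-121)*(N^2-169)*(N^2-225)/355687428096000))
    (hn : ∀ n : ℕ, c (n+1) * (n+1) = - ∑ i ∈ Finset.range (n+1), c i * p (n - i + 1)) :
    p 8 = (-61430943169/976924698750)*N^0 + (1024/19305)*N^2 + (8533792/1064188125)*N^4 + (134432/88409475)*N^6 + (2473/9568125)*N^8 + (1072/29469825)*N^10 + (113324/28733079375)*N^12 + (16/54729675)*N^14 + (3617/325641566250)*N^16 := by
  have p1 : p 1 = (-1/6)*N^0 + (1/6)*N^2 := by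
    have h := hn 0
    simp only [Finset.sum_range_succ, Finset.sum_range_zero] at h
    norm_num at h
    rw [h0, h1] at h
    linear_combination h
  have p2 : p 2 = (-11/90)*N^0 + (1/9)*N^2 + (1/90)*N^4 := by
    have h := hn 1
    simp only [Finset.sum_range_succ, Finset.sum_range_zero] at h
    norm_num at h
    rw [h0, h1, h2, p1] at h
    linear_combination h
  have p3 : p 3 = (-191/1890)*N^0 + (4/45)*N^2 + (1/90)*N^4 + (1/945)*N^6 := by
    have h := hn 2
    simp only [Finset.sum_range_succ, Finset.sum_range_zero] at h
    norm_num at h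
    rw [h0, h1, h2, h3, p1, p2] at h
    linear_combination h
  have p4 : p 4 = (-2497/28350)*N^0 + (8/105)*N^2 + (7/675)*N^4 + (4/2835)*N^6 + (1/9450)*N^8 := by
    have h := hn 3
    simp only [Finset.sum_range_succ, Finset.sum_range_zero] at h
    norm_num at h
    rw [h0, h1, h2, h3, h4, p1, p2, p3] at h
    linear_combination h
  have p5 : p 5 = (-14797/187110)*N^0 + (64/945)*N^2 + (82/8505)*N^4 + (13/8505)*N^6 + (1/5670)*N^8 + (1/93555)*N^10 := by
    have h := hn 4
    simp only [Finset.sum_range_succ, Finset.sum_range_zero] at h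
    norm_num at h
    rw [h0, h1, h2, h3, h4, h5, p1, p2, p3, p4] at h
    linear_combination h
  have p6 : p 6 = (-92427157/1277025750)*N^0 + (128/2079)*N^2 + (1916/212625)*N^4 + (278/178605)*N^6 + (31/141750)*N^8 + (2/93555)*N^10 + (691/638512875)*N^12 := by
    have h := hn 5
    simp only [Finset.sum_range_succ, Finset.sum_range_zero] at h
    norm_num at h
    rw [h0, h1, h2, h3, h4, h5, h6, p1, p2, p3, p4, p5] at h
    linear_combination h
  have p7 : p 7 = (-36740617/547296750)*N^0 + (512/9009)*N^2 + (944/111375)*N^4 + (592/382725)*N^6 + (311/1275750)*N^8 + (2/66825)*N^10 + (691/273648375)*N^12 + (2/18243225)*N^14 := by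
    have h := hn 6
    simp only [Finset.sum_range_succ, Finset.sum_range_zero] at h
    norm_num at h
    rw [h0, h1, h2, h3, h4, h5, h6, h7, p1, p2, p3, p4, p5, p6] at h
    linear_combination h
  have p8 : p 8 = (-61430943169/976924698750)*N^0 + (1024/19305)*N^2 + (8533792/1064188125)*N^4 + (134432/88409475)*N^6 + (2473/9568125)*N^8 + (1072/29469825)*N^10 + (113324/28733079375)*N^12 + (16/54729675)*N^14 + (3617/325641566250)*N^16 := by
    have h := hn 7
    simp only [Finset.sum_range_succ, Finset.sum_range_zero] at h
    norm_num at h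
    rw [h0, h1, h2, h3, h4, h5, h6, h7, h8, p1, p2, p3, p4, p5, p6, p7] at h
    linear_combination h
  exact p8

end S14

theorem stmt_14 (p : ℕ) (hp : p.Prime) (hodd : Odd p) (hp16 : 16 < p) :
    ((p : ℝ) ^ 8 / 2 ^ 17) * ∑ θ ∈ Finset.Icc 1 (p - 1), 1 / Real.sin (π * θ / p) ^ 16 =
      (1 / 131072) * (p : ℝ) ^ 8 * ((3617 / 162820783125) * (p : ℝ) ^ 16 +
        (32 / 54729675) * p ^ 14 + (226648 / 28733079375) * p ^ 12 +
        (2144 / 29469825) * p ^ 10 + (4946 / 9568125) * p ^ 8 +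
        (268864 / 88409475) * p ^ 6 + (17067584 / 1064188125) * p ^ 4 +
        (2048 / 19305) * p ^ 2 - 61430943169 / 488462349375) := by
  obtain ⟨m, hm⟩ := hodd
  have hN : (p : ℝ) = 2 * m + 1 := by rw [hm]; push_cast; ring
  have hN0 : (2 * (m:ℝ) + 1) ≠ 0 := by positivity
  have hc : ∀ j a, (S14.G m).coeff j = (2 * (m:ℝ) + 1) * a →
      (∏ k ∈ Finset.Icc 1 m, (1 - Polynomial.C ((1 / sin (π * k / (2*m+1)) ^ 2)) * Polynomial.X)).coeff j = a := by
    intro j a h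
    rw [S14.G_prod, Polynomial.coeff_C_mul] at h
    exact mul_left_cancel₀ hN0 h
  have key := S14.alg (2 * (m:ℝ) + 1)
    (fun j => (∏ k ∈ Finset.Icc 1 m, (1 - Polynomial.C ((1 / sin (π * k / (2*m+1)) ^ 2)) * Polynomial.X)).coeff j)
    (fun n => ∑ k ∈ Finset.Icc 1 m, (1 / sin (π * k / (2*m+1)) ^ 2) ^ n)
    (hc 0 _ (S14.c0 m _ rfl))
    (hc 1 _ (S14.c1 m _ rfl))
    (hc 2 _ (S14.c2 m _ rfl))
    (hc 3 _ (S14.c3 m _ rfl))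
    (hc 4 _ (S14.c4 m _ rfl))
    (hc 5 _ (S14.c5 m _ rfl))
    (hc 6 _ (S14.c6 m _ rfl))
    (hc 7 _ (S14.c7 m _ rfl))
    (hc 8 _ (S14.c8 m _ rfl))
    (fun n => S14.newton ℕ (Finset.Icc 1 m) (fun k => 1 / sin (π * k / (2*m+1)) ^ 2) n)
  have hsum : ∑ θ ∈ Finset.Icc 1 (p - 1), 1 / Real.sin (π * θ / p) ^ 16 =
      2 * ∑ k ∈ Finset.Icc 1 m, (1 / sin (π * k / (2*m+1)) ^ 2) ^ 8 := by
    have hp1 : p - 1 = 2 * m := by omega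
    rw [hp1, S14.half m (fun θ => 1 / Real.sin (π * θ / p) ^ 16)]
    · congr 1
      refine Finset.sum_congr rfl fun k _ => ?_
      rw [hN, div_pow, ← pow_mul, one_pow]
    · intro k hk
      rw [Finset.mem_Icc] at hk
      have : π * ((2*m+1-k : ℕ) : ℝ) / p = π - π * k / p := by
        rw [Nat.cast_sub (by omega), hN]; push_cast; field_simp
      rw [this, sin_pi_sub]
  rw [hsum, key, hN]
  ring
end
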